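/- Let k ∈ ℕ, m ∈ ℚ, and let G be a graph with at most countably many ends in which every end is dominated by fewer than k vertices, every vertex has degree > m and every end has relative degree > m. Then for any finite X ⊆ V(G), G has an induced subgraph G' and a collection 𝓕 of pairwise disjoint finite vertex sets such that: (i) X ∪ ⋃𝓕 ⊆ V(G'); (ii) there are disjoint connected subgraphs H_F (F ∈ 𝓕) of G with V(H_F) ∩ V(G') = F; (iii) every vertex of G' of degree ≤ m in G' lies in some F ∈ 𝓕 whose average degree in G' exceeds m − k + 1; and (iv) every ray of G meets V(G') in only finitely many vertices. -/

import Mathlib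

open scoped ENNReal

namespace Paper

variable {V : Type*} {W : Type*}

/-- Reachability in `G` by a walk avoiding the vertex set `S`. -/
def ReachAvoid (G : SimpleGraph V) (S : Set V) (u v : V) : Prop :=
  ∃ p : G.Walk u v, ∀ x ∈ p.support, x ∉ S

/-- A ray (one-way infinite path) in `G`. -/
structure IsRay (G : SimpleGraph V) (f : ℕ → V) : Prop where
  inj : Function.Injective f
  adj : ∀ n, G.Adj (f n) (f (n + 1))

/-- Two rays are equivalent (belong to the same end) if no finite vertex set
separates them: for every finite `S` some vertex of the first ray can be joined
to some vertex of the second by a walk avoiding `S`. -/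
def EquivRay (G : SimpleGraph V) (f g : ℕ → V) : Prop :=
  ∀ S : Set V, S.Finite → ∃ m n, ReachAvoid G S (f m) (g n)

/-- The set of ends of `G`: rays modulo equivalence. -/
def Ends (G : SimpleGraph V) :=
  Quot (fun f g : {f : ℕ → V // IsRay G f} => EquivRay G f.1 g.1)

/-- `v` dominates the ray `f`: there are infinitely many `v`–`V(f)` paths
pairwise disjoint except in `v`. -/
def DominatesRay (G : SimpleGraph V) (v : V) (f : ℕ → V) : Prop :=
  ∃ (g : ℕ → ℕ) (p : ∀ n, G.Walk v (f (g n))),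
    Function.Injective g ∧ (∀ n, (p n).IsPath) ∧
    ∀ m n, m ≠ n → ∀ x ∈ (p m).support, x ∈ (p n).support → x = v

/-- The set of vertices dominating the end of the ray `r`. -/
def Dom (G : SimpleGraph V) (r : ℕ → V) : Set V := {v | DominatesRay G v r}

/-- Vertex-boundary of the vertex set `A`. -/
def vBoundary (G : SimpleGraph V) (A : Set V) : Set V :=
  {x | x ∈ A ∧ ∃ y, y ∉ A ∧ G.Adj x y}

/-- Edge-boundary of the vertex set `A`. -/
def eBoundary (G : SimpleGraph V) (A : Set V) : Set (Sym2 V) :=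
  {e | ∃ x y, x ∈ A ∧ y ∉ A ∧ G.Adj x y ∧ e = s(x, y)}

/-- `S` is a `V'`–`Ω(A)` separator: `V' ⊄ S` and no component of `G - S`
contains both a vertex of `V'` and (the tail of) a ray lying in `A`. -/
def SepVertsEndsIn (G : SimpleGraph V) (V' S A : Set V) : Prop :=
  ¬ V' ⊆ S ∧ ∀ v ∈ V', ∀ f : ℕ → V, IsRay G f → Set.range f ⊆ A →
    ∀ n, (∀ m, n ≤ m → f m ∉ S) → ¬ ReachAvoid G S v (f n)

/-- `S` is an inclusion-minimal `V'`–`Ω(A)` separator. -/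
def MinSepVertsEndsIn (G : SimpleGraph V) (V' S A : Set V) : Prop :=
  SepVertsEndsIn G V' S A ∧ ∀ S' ⊂ S, ¬ SepVertsEndsIn G V' S' A

/-- The graph `G_ω`: `G` minus the dominating vertices of the end of `r`. -/
def Gmin (G : SimpleGraph V) (r : ℕ → V) : SimpleGraph ((Dom G r)ᶜ : Set V) :=
  G.induce ((Dom G r)ᶜ : Set V)

/-- A ray of `G_ω` belonging to (the unique end `ω̂` induced by) the end `ω` of
the ray `r`. -/
def InDeletedEnd (G : SimpleGraph V) (r : ℕ → V)
    (f : ℕ → ((Dom G r)ᶜ : Set V)) : Prop :=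
  IsRay (Gmin G r) f ∧ EquivRay G (fun n => (f n : V)) r

/-- An `ω̂`-region of `G_ω`: induced connected, finite vertex-boundary,
containing a ray of `ω̂`. -/
def IsOmegaRegion (G : SimpleGraph V) (r : ℕ → V)
    (A : Set ((Dom G r)ᶜ : Set V)) : Prop :=
  ((Gmin G r).induce A).Connected ∧ (vBoundary (Gmin G r) A).Finite ∧
    ∃ f, InDeletedEnd G r f ∧ Set.range f ⊆ A

/-- `(Ĥ_i) → ω̂` : a sequence of distinct nested `ω̂`-regions whose
vertex-boundaries are minimal separators. -/
def Converges (G : SimpleGraph V) (r : ℕ → V)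
    (A : ℕ → Set ((Dom G r)ᶜ : Set V)) : Prop :=
  Function.Injective A ∧ (∀ i, IsOmegaRegion G r (A i)) ∧
    (∀ i, A (i + 1) ⊆ A i \ vBoundary (Gmin G r) (A i)) ∧
    (∀ i, MinSepVertsEndsIn (Gmin G r) (vBoundary (Gmin G r) (A i))
      (vBoundary (Gmin G r) (A (i + 1))) (A (i + 1)))

/-- The ratio `|∂_e A| / |∂_v A|`, as an extended nonnegative real. -/
noncomputable def bratio (G : SimpleGraph V) (A : Set V) : ℝ≥0∞ :=
  ((eBoundary G A).encard : ℝ≥0∞) / ((vBoundary G A).encard : ℝ≥0∞)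

open Classical in
/-- The relative degree `d_{e/v}` of the end of the ray `r`. -/
noncomputable def relDegree (G : SimpleGraph V) (r : ℕ → V) : ℝ≥0∞ :=
  if (Dom G r).Infinite ∨ ¬ ∃ f, InDeletedEnd G r f then
    ((Dom G r).encard : ℝ≥0∞)
  else
    ((Dom G r).encard : ℝ≥0∞) +
      ⨅ A : {A : ℕ → Set ((Dom G r)ᶜ : Set V) // Converges G r A},
        Filter.atTop.liminf fun i => bratio (Gmin G r) (A.1 i)

/-- The degree of a vertex, as an extended real. -/
noncomputable def degER (G : SimpleGraph V) (v : V) : EReal :=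
  (((G.neighborSet v).encard : ℝ≥0∞) : EReal)

/-- A subdivision of `K_k` in `G` with branching vertices `b 0, …, b (k-1)`. -/
def HasTKOn (G : SimpleGraph V) {k : ℕ} (b : Fin k ↪ V) : Prop :=
  ∃ p : ∀ i j : Fin k, G.Walk (b i) (b j),
    (∀ i j, i ≠ j → (p i j).IsPath) ∧
    (∀ i j, i ≠ j → ∀ x ∈ (p i j).support, x ∈ Set.range b → x = b i ∨ x = b j) ∧
    (∀ i j i' j', i ≠ j → i' ≠ j' → s(i, j) ≠ s(i', j') →
      ∀ x ∈ (p i j).support, x ∈ (p i' j').support → x ∈ Set.range b)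

/-- `K_k` is a topological minor of `G`. -/
def HasTopK (G : SimpleGraph V) (k : ℕ) : Prop :=
  ∃ b : Fin k ↪ V, HasTKOn G b

/-- A subdivision of `K_{ℵ₀}` in `G` with branching vertices `b 0, b 1, …`. -/
def HasTKInfOn (G : SimpleGraph V) (b : ℕ ↪ V) : Prop :=
  ∃ p : ∀ i j : ℕ, G.Walk (b i) (b j),
    (∀ i j, i ≠ j → (p i j).IsPath) ∧
    (∀ i j, i ≠ j → ∀ x ∈ (p i j).support, x ∈ Set.range b → x = b i ∨ x = b j) ∧
    (∀ i j i' j', i ≠ j → i' ≠ j' → s(i, j) ≠ s(i', j') →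
      ∀ x ∈ (p i j).support, x ∈ (p i' j').support → x ∈ Set.range b)

/-- `K_k` is a minor of `G` (with finite branch sets). -/
def HasKMinor (G : SimpleGraph V) (k : ℕ) : Prop :=
  ∃ B : Fin k → Finset V,
    (∀ i, (B i).Nonempty) ∧ (∀ i j, i ≠ j → Disjoint (B i) (B j)) ∧
    (∀ i, (G.induce (B i : Set V)).Connected) ∧
    (∀ i j, i ≠ j → ∃ x ∈ B i, ∃ y ∈ B j, G.Adj x y)

/-- The average degree of the finite induced subgraph of `G` on `s`. -/
noncomputable def avgDegOn (G : SimpleGraph V) (s : Finset V) : ℝ :=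
  (∑ v ∈ s, ((G.neighborSet v ∩ ↑s).ncard : ℝ)) / s.card

/-- `G` is rayless. -/
def Rayless (G : SimpleGraph V) : Prop := ¬ ∃ f : ℕ → V, IsRay G f

/-- The average degree of the vertex set `F` into `A` in `G`. -/
noncomputable def avgDegIn (G : SimpleGraph V) (A F : Set V) : ℝ :=
  (∑ᶠ v ∈ F, ((G.neighborSet v ∩ A).ncard : ℝ)) / F.ncard

/-!
Deal with the ends one at a time, keeping a growing set of vertices that is finite at every step.
If the end `ω` still has rays outside the parts removed so far, then `G - Dom ω` contains a region
`R` of `ω` that avoids the kept vertices. Minimal separators provide a sequence of such regions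
converging to `ω`, so by the relative degree of `ω` the region can be chosen so that its
vertex-boundary `F` has average degree more than `m - |Dom ω| ≥ m - k + 1`, counting only edges to
some finite set outside `R`. Remove `R \ F` and keep `F`, this finite set, `Dom ω`, and more than
`m` neighbours of each dominating vertex. A dominating vertex has infinitely many neighbours outside
the parts already removed, and `Dom ω ∪ F` separates `R \ F` from the rest of `G`, so no vertex
outside `R` is left with small degree. Since `G` has countably many ends, in the limit every ray has
a tail in a removed part.

The kept vertices may be infinitely many at that point, but only finitely many are needed. Each
vertex outside all regions asks for finitely many of its remaining neighbours, and each vertex of a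
region for the vertices of one finite connected piece of that region containing its kept vertices,
together with finitely many kept vertices. Every ray eventually stays in a removed part, so
it cannot follow these requests forever; by König's lemma the closure of `X` under the requests is
finite.
-/

section Reachability

variable {G : SimpleGraph V} {S T : Set V} {u v w : V}

theorem mem_vBoundary_compl : v ∈ vBoundary G Tᶜ ↔ v ∉ T ∧ ∃ u ∈ T, G.Adj v u := by
  simp [vBoundary]

namespace ReachAvoid

theorem refl (hu : u ∉ S) : ReachAvoid G S u u :=
  ⟨.nil, by simpa using hu⟩

theorem symm (h : ReachAvoid G S u v) : ReachAvoid G S v u := by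
  obtain ⟨p, hp⟩ := h
  exact ⟨p.reverse, by simpa using hp⟩

theorem trans (huv : ReachAvoid G S u v) (hvw : ReachAvoid G S v w) : ReachAvoid G S u w := by
  obtain ⟨p, hp⟩ := huv
  obtain ⟨q, hq⟩ := hvw
  exact ⟨p.append q, fun x hx => (p.mem_support_append_iff q).1 hx |>.elim (hp x) (hq x)⟩

theorem mono (hTS : T ⊆ S) (h : ReachAvoid G S u v) : ReachAvoid G T u v := by
  obtain ⟨p, hp⟩ := h
  exact ⟨p, fun x hx hxT => hp x hx (hTS hxT)⟩

theorem of_adj (h : G.Adj u v) (hu : u ∉ S) (hv : v ∉ S) : ReachAvoid G S u v :=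
  ⟨h.toWalk, by simp [hu, hv]⟩

theorem notMem_left (h : ReachAvoid G S u v) : u ∉ S := by
  obtain ⟨p, hp⟩ := h
  exact hp u p.start_mem_support

theorem notMem_right (h : ReachAvoid G S u v) : v ∉ S :=
  h.symm.notMem_left

theorem mem_of_vBoundary_compl_subset (h : ReachAvoid G S u v) (hT : vBoundary G Tᶜ ⊆ S)
    (hu : u ∈ T) : v ∈ T := by
  by_contra hv
  obtain ⟨p, hp⟩ := h
  obtain ⟨d, hd, hfst, hsnd⟩ := p.exists_boundary_dart T hu hv
  exact hp _ (p.dart_snd_mem_support_of_mem_darts hd)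
    (hT (mem_vBoundary_compl.2 ⟨hsnd, d.fst, hfst, d.adj.symm⟩))

theorem mem_of_vBoundary_subset (h : ReachAvoid G S u v) (hT : vBoundary G T ⊆ S)
    (hu : u ∈ T) : v ∈ T := by
  by_contra hv
  exact h.symm.mem_of_vBoundary_compl_subset (T := Tᶜ) (by rwa [compl_compl]) hv hu

theorem of_forall_mem (h : ReachAvoid G S u v) (hT : ∀ x, ReachAvoid G S u x → x ∈ T) :
    ReachAvoid G Tᶜ u v := by
  classical
  obtain ⟨p, hp⟩ := h
  refine ⟨p, fun x hx hxT => hxT (hT x ⟨p.takeUntil x hx, fun y hy => hp y ?_⟩)⟩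
  exact p.support_takeUntil_subset_support hx hy

theorem of_induce {s : Set V} {u v : s} (h : ReachAvoid (G.induce s) (Subtype.val ⁻¹' S) u v) :
    ReachAvoid G (S ∪ sᶜ) u v := by
  obtain ⟨p, hp⟩ := h
  refine ⟨p.map (SimpleGraph.Embedding.induce s).toHom, fun x hx => ?_⟩
  obtain ⟨y, hy, rfl⟩ := List.mem_map.1
    ((SimpleGraph.Walk.support_map (SimpleGraph.Embedding.induce s).toHom p) ▸ hx)
  simpa using hp y hy

end ReachAvoid

theorem induce_connected_iff :
    (G.induce S).Connected ↔ S.Nonempty ∧ ∀ u ∈ S, ∀ v ∈ S, ReachAvoid G Sᶜ u v := by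
  constructor
  · intro h
    refine ⟨Set.nonempty_coe_sort.1 h.nonempty, fun u hu v hv => ?_⟩
    obtain ⟨p⟩ := h.preconnected ⟨u, hu⟩ ⟨v, hv⟩
    simpa using ReachAvoid.of_induce (S := ∅) ⟨p, by simp⟩
  · rintro ⟨hne, h⟩
    have := hne.to_subtype
    refine ⟨fun u v => ?_⟩
    obtain ⟨p, hp⟩ := h u u.2 v v.2
    exact ⟨p.induce S fun x hx => by simpa using hp x hx⟩

theorem induce_image_val_connected {s : Set V} {A : Set s}
    (hA : ((G.induce s).induce A).Connected) :
    (G.induce (Subtype.val '' A)).Connected := by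
  obtain ⟨hne, hreach⟩ := induce_connected_iff.1 hA
  refine induce_connected_iff.2 ⟨hne.image _, ?_⟩
  rintro _ ⟨u, hu, rfl⟩ _ ⟨v, hv, rfl⟩
  refine (ReachAvoid.of_induce (S := (Subtype.val '' A)ᶜ) ?_).mono Set.subset_union_left
  rw [Set.preimage_compl, Set.preimage_image_eq A Subtype.val_injective]
  exact hreach u hu v hv

theorem exists_finite_induce_connected {F R : Set V} (hR : (G.induce R).Connected) (hF : F.Finite)
    (hne : F.Nonempty) (hFR : F ⊆ R) :
    ∃ K, K.Finite ∧ F ⊆ K ∧ K ⊆ R ∧ (G.induce K).Connected := by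
  obtain ⟨x, hx⟩ := hne
  have hfin : (Subtype.val ⁻¹' F : Set R).Finite := hF.preimage Subtype.val_injective.injOn
  obtain ⟨K, hFK, hK⟩ := SimpleGraph.extend_finset_to_connected hR.preconnected
    (t := hfin.toFinset) ⟨⟨x, hFR hx⟩, by simpa using hx⟩
  refine ⟨Subtype.val '' (K : Set R), K.finite_toSet.image _, fun y hy => ?_,
    Subtype.coe_image_subset R _, induce_image_val_connected hK⟩
  exact ⟨⟨y, hFR hy⟩, hFK (by simpa using hy), rfl⟩

end Reachability

section Rays

open Filter

variable {G : SimpleGraph V} {f g h : ℕ → V} {S U : Set V}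

namespace IsRay

theorem tail (hf : IsRay G f) (N : ℕ) : IsRay G fun n => f (N + n) :=
  ⟨fun a b hab => by simpa using hf.inj hab, fun n => hf.adj (N + n)⟩

theorem eventually_notMem (hf : IsRay G f) (hS : S.Finite) : ∀ᶠ n in atTop, f n ∉ S := by
  simpa [Nat.cofinite_eq_atTop] using hf.inj.tendsto_cofinite.eventually hS.compl_mem_cofinite

theorem reachAvoid (hf : IsRay G f) {N : ℕ} (hS : ∀ n ≥ N, f n ∉ S) {a b : ℕ} (ha : N ≤ a)
    (hb : N ≤ b) : ReachAvoid G S (f a) (f b) := by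
  have from_N : ∀ n ≥ N, ReachAvoid G S (f N) (f n) := by
    intro n hn
    induction n, hn using Nat.le_induction with
    | base => exact .refl (hS N le_rfl)
    | succ n hn ih => exact ih.trans (.of_adj (hf.adj n) (hS n hn) (hS _ (by omega)))
  exact (from_N a ha).symm.trans (from_N b hb)

theorem eventually_mem_of_frequently_mem (hf : IsRay G f) (hU : (vBoundary G Uᶜ).Finite)
    (hfU : ∃ᶠ n in atTop, f n ∈ U) : ∀ᶠ n in atTop, f n ∈ U := by
  obtain ⟨N, hN⟩ := eventually_atTop.1 (hf.eventually_notMem hU)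
  obtain ⟨a, ha, haU⟩ := frequently_atTop.1 hfU N
  filter_upwards [eventually_ge_atTop a] with n hn
  exact (hf.reachAvoid hN ha (ha.trans hn)).mem_of_vBoundary_compl_subset subset_rfl haU

theorem exists_induce_tail (hf : IsRay G f) (hfU : ∀ᶠ n in atTop, f n ∈ U) :
    ∃ (N : ℕ) (g : ℕ → U), IsRay (G.induce U) g ∧ ∀ n, (g n : V) = f (N + n) := by
  obtain ⟨N, hN⟩ := eventually_atTop.1 hfU
  exact ⟨N, fun n => ⟨f (N + n), hN _ (by omega)⟩,
    ⟨fun a b hab => (hf.tail N).inj (congrArg Subtype.val hab), (hf.tail N).adj⟩, fun _ => rfl⟩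

end IsRay

namespace EquivRay

theorem refl (hf : IsRay G f) : EquivRay G f f := by
  intro S hS
  obtain ⟨n, hn⟩ := (hf.eventually_notMem hS).exists
  exact ⟨n, n, .refl hn⟩

theorem symm (hfg : EquivRay G f g) : EquivRay G g f := by
  intro S hS
  obtain ⟨m, n, hmn⟩ := hfg S hS
  exact ⟨n, m, hmn.symm⟩

theorem exists_ge_reachAvoid (hfg : EquivRay G f g) (hS : S.Finite) (N : ℕ) :
    ∃ m ≥ N, ∃ n ≥ N, ReachAvoid G S (f m) (g n) := by
  have hfin : (S ∪ (f '' Set.Iio N ∪ g '' Set.Iio N)).Finite :=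
    hS.union (((Set.finite_Iio N).image f).union ((Set.finite_Iio N).image g))
  obtain ⟨m, n, hmn⟩ := hfg _ hfin
  refine ⟨m, ?_, n, ?_, hmn.mono Set.subset_union_left⟩
  · by_contra hm
    exact hmn.notMem_left (.inr (.inl ⟨m, by simpa using hm, rfl⟩))
  · by_contra hn
    exact hmn.notMem_right (.inr (.inr ⟨n, by simpa using hn, rfl⟩))

theorem trans (hg : IsRay G g) (hfg : EquivRay G f g) (hgh : EquivRay G g h) :
    EquivRay G f h := by
  intro S hS
  obtain ⟨N, hN⟩ := eventually_atTop.1 (hg.eventually_notMem hS)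
  obtain ⟨a, -, b, hb, hab⟩ := hfg.exists_ge_reachAvoid hS N
  obtain ⟨c, hc, d, -, hcd⟩ := hgh.exists_ge_reachAvoid hS N
  exact ⟨a, d, hab.trans ((hg.reachAvoid hN hb hc).trans hcd)⟩

theorem of_mk_eq_mk {f g : {f : ℕ → V // IsRay G f}}
    (hfg : (Quot.mk _ f : Ends G) = Quot.mk _ g) : EquivRay G f g := by
  have equiv : Equivalence fun f g : {f : ℕ → V // IsRay G f} => EquivRay G f g :=
    ⟨fun f => .refl f.2, symm, fun {_ f _} => .trans f.2⟩
  exact equiv.eqvGen_iff.1 (Quot.eqvGen_exact hfg)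

theorem eventually_mem (hg : IsRay G g) (hfg : EquivRay G f g) (hU : (vBoundary G Uᶜ).Finite)
    (hf : ∀ᶠ n in atTop, f n ∈ U) : ∀ᶠ n in atTop, g n ∈ U := by
  refine hg.eventually_mem_of_frequently_mem hU (frequently_atTop.2 fun N => ?_)
  obtain ⟨M, hM⟩ := eventually_atTop.1 hf
  obtain ⟨a, ha, b, hb, hab⟩ := hfg.exists_ge_reachAvoid hU (max M N)
  exact ⟨b, (le_max_right M N).trans hb,
    hab.mem_of_vBoundary_compl_subset subset_rfl (hM a ((le_max_left M N).trans ha))⟩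

end EquivRay

end Rays

section RayComponents

open Filter

variable {G : SimpleGraph V} {f : ℕ → V} {S : Set V} {u v : V}

/-- The component of `G - S` in which a tail of the ray `f` lies (for finite `S`): the vertices
joined outside `S` to all late vertices of `f`. -/
def rayComp (G : SimpleGraph V) (f : ℕ → V) (S : Set V) : Set V :=
  {v | ∀ᶠ n in atTop, ReachAvoid G S v (f n)}

theorem notMem_of_mem_rayComp (hv : v ∈ rayComp G f S) : v ∉ S :=
  hv.exists.elim fun _ hn => hn.notMem_left

theorem ReachAvoid.mem_rayComp (h : ReachAvoid G S u v) (hv : v ∈ rayComp G f S) :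
    u ∈ rayComp G f S :=
  hv.mono fun _ hn => h.trans hn

theorem vBoundary_compl_rayComp_subset : vBoundary G (rayComp G f S)ᶜ ⊆ S := by
  intro x hx
  obtain ⟨hxC, y, hyC, hxy⟩ := mem_vBoundary_compl.1 hx
  by_contra hxS
  exact hxC ((ReachAvoid.of_adj hxy hxS (notMem_of_mem_rayComp hyC)).mem_rayComp hyC)

theorem vBoundary_rayComp_union_subset : vBoundary G (rayComp G f S ∪ S) ⊆ S := by
  rintro x ⟨hx | hx, y, hy, hxy⟩
  · exact absurd (.inr (vBoundary_compl_rayComp_subset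
      (mem_vBoundary_compl.2 ⟨fun h => hy (.inl h), x, hx, hxy.symm⟩))) hy
  · exact hx

theorem IsRay.eventually_mem_rayComp (hf : IsRay G f) (hS : S.Finite) :
    ∀ᶠ n in atTop, f n ∈ rayComp G f S := by
  obtain ⟨N, hN⟩ := eventually_atTop.1 (hf.eventually_notMem hS)
  filter_upwards [eventually_ge_atTop N] with a ha
  filter_upwards [eventually_ge_atTop N] with b hb
  exact hf.reachAvoid hN ha hb

theorem reachAvoid_compl_rayComp (hu : u ∈ rayComp G f S) (hv : v ∈ rayComp G f S) :
    ReachAvoid G (rayComp G f S)ᶜ u v := by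
  obtain ⟨n, hun, hvn⟩ := (hu.and hv).exists
  exact (hun.trans hvn.symm).of_forall_mem fun x hx => hx.symm.mem_rayComp hu

theorem IsRay.induce_rayComp_union_connected (hf : IsRay G f) (hS : S.Finite)
    (hSC : S ⊆ vBoundary G (rayComp G f S)ᶜ) :
    (G.induce (rayComp G f S ∪ S)).Connected := by
  have exists_rayComp : ∀ x ∈ rayComp G f S ∪ S,
      ∃ y ∈ rayComp G f S, ReachAvoid G (rayComp G f S ∪ S)ᶜ x y := by
    rintro x (hx | hx)
    · exact ⟨x, hx, .refl fun h => h (.inl hx)⟩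
    · obtain ⟨-, y, hy, hxy⟩ := mem_vBoundary_compl.1 (hSC hx)
      exact ⟨y, hy, .of_adj hxy (fun h => h (.inr hx)) fun h => h (.inl hy)⟩
  obtain ⟨n, hn⟩ := (hf.eventually_mem_rayComp hS).exists
  refine induce_connected_iff.2 ⟨⟨f n, .inl hn⟩, fun x hx y hy => ?_⟩
  obtain ⟨x', hx', hxx'⟩ := exists_rayComp x hx
  obtain ⟨y', hy', hyy'⟩ := exists_rayComp y hy
  have hx'y' := (reachAvoid_compl_rayComp hx' hy').mono
    (Set.compl_subset_compl.2 (Set.subset_union_left (t := S)))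
  exact hxx'.trans (hx'y'.trans hyy'.symm)

theorem IsRay.mem_vBoundary_of_mem_rayComp_sdiff (hf : IsRay G f) (hS : S.Finite)
    (hu : u ∉ rayComp G f S ∪ S) (huv : u ∈ rayComp G f (S \ {v})) :
    v ∈ vBoundary G (rayComp G f S)ᶜ ∧ v ∈ vBoundary G (rayComp G f S ∪ S) := by
  obtain ⟨n, hun, hn⟩ := (huv.and (hf.eventually_mem_rayComp hS)).exists
  constructor
  · by_contra hv
    exact hu (.inl (hun.symm.mem_of_vBoundary_compl_subset (fun x hx =>
      ⟨vBoundary_compl_rayComp_subset hx, fun hxv => hv (hxv ▸ hx)⟩) hn))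
  · by_contra hv
    exact hu (hun.symm.mem_of_vBoundary_subset (fun x hx =>
      ⟨vBoundary_rayComp_union_subset hx, fun hxv => hv (hxv ▸ hx)⟩) (.inl hn))

end RayComponents

section Domination

open Filter

variable {G : SimpleGraph V} {f r : ℕ → V} {S U : Set V} {v : V}

/-- Some finite vertex set not containing `v` separates `v` from a tail of the ray `f`. -/
def FinitelySeparated (G : SimpleGraph V) (f : ℕ → V) (v : V) : Prop :=
  ∃ S : Set V, S.Finite ∧ v ∉ S ∧ v ∉ rayComp G f S

theorem IsRay.dominatesRay_of_not_finitelySeparated (hf : IsRay G f)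
    (hv : ¬ FinitelySeparated G f v) : DominatesRay G v f := by
  classical
  let meetOnlyAt (p q : Σ n, G.Walk v (f n)) : Prop :=
    ∀ z ∈ p.2.support, z ∈ q.2.support → z = v
  have : Std.Symm meetOnlyAt := ⟨fun p q h z hz hz' => h z hz' hz⟩
  obtain ⟨p, hp, hdisj⟩ := exists_seq_of_forall_finset_exists'
      (fun p : Σ n, G.Walk v (f n) => p.2.IsPath ∧ f p.1 ≠ v) meetOnlyAt (by
    intro s _
    have hfin : ((⋃ p ∈ s, {z | z ∈ p.2.support}) \ {v}).Finite :=
      (s.finite_toSet.biUnion fun p _ => p.2.support.finite_toSet).sdiff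
    have hvC : v ∈ rayComp G f _ := by_contra fun h => hv ⟨_, hfin, by simp, h⟩
    obtain ⟨n, ⟨q, hq⟩, hn⟩ := (hvC.and (hf.eventually_notMem (Set.finite_singleton v))).exists
    refine ⟨⟨n, q.bypass⟩, ⟨q.bypass_isPath, hn⟩, fun p hp z hzp hzq => ?_⟩
    by_contra hzv
    exact hq z (q.support_bypass_subset_support hzq) ⟨Set.mem_biUnion hp hzp, hzv⟩)
  refine ⟨fun n => (p n).1, fun n => (p n).2, fun a b hab => ?_, fun n => (hp n).1,
    fun a b hab => hdisj hab⟩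
  by_contra hne
  exact (hp a).2 (hdisj hne _ (p a).2.end_mem_support
    (congrArg f hab.symm ▸ (p b).2.end_mem_support))

theorem DominatesRay.frequently_exists_isPath (hv : DominatesRay G v r) (hS : S.Finite) :
    ∃ᶠ n in atTop, ∃ p : G.Walk v (r n), p.IsPath ∧ ∀ x ∈ p.support, x ∈ S → x = v := by
  obtain ⟨g, p, hg, hpath, hdisj⟩ := hv
  have hmeet : ∀ x ∈ S \ {v}, {i | x ∈ (p i).support}.Subsingleton := by
    intro x hx i hi j hj
    by_contra hij
    exact hx.2 (hdisj i j hij x hi hj)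
  have hbad : (⋃ x ∈ S \ {v}, {i | x ∈ (p i).support}).Finite :=
    hS.sdiff.biUnion fun x hx => (hmeet x hx).finite
  refine frequently_atTop.2 fun N => ?_
  have hearly : {i | g i < N}.Finite := (Set.finite_Iio N).preimage hg.injOn
  obtain ⟨i, hi⟩ := (hbad.union hearly).infinite_compl.nonempty
  refine ⟨g i, not_lt.1 fun hlt => hi (.inr hlt), p i, hpath i, fun x hx hxS => ?_⟩
  by_contra hxv
  exact hi (.inl (Set.mem_biUnion ⟨hxS, hxv⟩ hx))

theorem DominatesRay.frequently_exists_adj (hr : IsRay G r) (hv : DominatesRay G v r)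
    (hS : S.Finite) : ∃ᶠ n in atTop, ∃ w, G.Adj v w ∧ ReachAvoid G S w (r n) := by
  refine ((hv.frequently_exists_isPath hS).and_eventually
    (hr.eventually_notMem (Set.finite_singleton v))).mono ?_
  rintro n ⟨⟨p, hpath, hp⟩, hn⟩
  cases p with
  | nil => exact absurd rfl hn
  | @cons _ w _ hvw q =>
    have hvq := (SimpleGraph.Walk.cons_isPath_iff hvw q).1 hpath |>.2
    exact ⟨w, hvw, q, fun x hx hxS => hvq (hp x (by simp [hx]) hxS ▸ hx)⟩

theorem DominatesRay.exists_adj_notMem (hr : IsRay G r) (hv : DominatesRay G v r)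
    (hU : (vBoundary G Uᶜ).Finite) (hrU : ∀ᶠ n in atTop, r n ∉ U) (hS : S.Finite) :
    ∃ w, G.Adj v w ∧ w ∉ U ∧ w ∉ vBoundary G Uᶜ ∪ S := by
  obtain ⟨n, ⟨w, hvw, hwn⟩, hn⟩ :=
    ((hv.frequently_exists_adj hr (hU.union hS)).and_eventually hrU).exists
  refine ⟨w, hvw, fun hwU => hn ?_, hwn.notMem_left⟩
  exact hwn.mem_of_vBoundary_compl_subset Set.subset_union_left hwU

theorem DominatesRay.notMem_of_eventually_notMem (hr : IsRay G r) (hv : DominatesRay G v r)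
    (hU : (vBoundary G Uᶜ).Finite) (hrU : ∀ᶠ n in atTop, r n ∉ U) : v ∉ U := by
  intro hvU
  obtain ⟨w, hvw, hwU, hw⟩ := hv.exists_adj_notMem hr hU hrU Set.finite_empty
  exact hw (.inl (mem_vBoundary_compl.2 ⟨hwU, v, hvU, hvw.symm⟩))

theorem DominatesRay.infinite_neighborSet_sdiff (hr : IsRay G r) (hv : DominatesRay G v r)
    (hU : (vBoundary G Uᶜ).Finite) (hrU : ∀ᶠ n in atTop, r n ∉ U) :
    (G.neighborSet v \ U).Infinite := by
  intro hfin
  obtain ⟨w, hvw, hwU, hw⟩ := hv.exists_adj_notMem hr hU hrU hfin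
  exact hw (.inr ⟨hvw, hwU⟩)

end Domination

section Regions

open Filter

variable {G : SimpleGraph V} {f : ℕ → V} {A B P : Set V}

theorem IsRay.exists_finset_disjoint_rayComp_union (hf : IsRay G f) (hP : P.Finite)
    (hsep : ∀ p ∈ P, FinitelySeparated G f p) :
    ∃ S : Finset V, Disjoint P (rayComp G f S ∪ S) := by
  choose! T hT hpT hpC using hsep
  have hfin : ((⋃ p ∈ P, T p) \ P).Finite := (hP.biUnion hT).sdiff
  refine ⟨hfin.toFinset, ?_⟩
  rw [hfin.coe_toFinset, Set.disjoint_union_right]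
  refine ⟨Set.disjoint_left.2 fun p hp hpf => ?_, Set.disjoint_sdiff_right⟩
  have hlate : ∀ᶠ n in atTop, f n ∈ (⋂ q ∈ P, rayComp G f (T q)) \ P := by
    simp only [Set.mem_sdiff, Set.mem_iInter]
    exact (hP.eventually_all.2 fun q hq => hf.eventually_mem_rayComp (hT q hq)).and
      (hf.eventually_notMem hP)
  obtain ⟨n, hpn, hn⟩ := (hpf.and hlate).exists
  refine (hpn.symm.mem_of_vBoundary_compl_subset (fun x hx => ?_) hn).2 hp
  obtain ⟨hxI, y, hy, hxy⟩ := mem_vBoundary_compl.1 hx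
  simp only [Set.mem_sdiff, Set.mem_iInter] at hxI hy
  have hout : ∀ q ∈ P, x ∉ rayComp G f (T q) → x ∈ T q := fun q hq hxq =>
    vBoundary_compl_rayComp_subset (mem_vBoundary_compl.2 ⟨hxq, y, hy.1 q hq, hxy⟩)
  have hxP : x ∉ P := fun hxP => hpT x hxP (hout x hxP (hpC x hxP))
  obtain ⟨q, hq, hxq⟩ : ∃ q ∈ P, x ∉ rayComp G f (T q) := by
    by_contra! h
    exact hxI ⟨h, hxP⟩
  exact ⟨Set.mem_biUnion hq (hout q hq hxq), hxP⟩

theorem IsRay.exists_minimal_disjoint_rayComp_union (hf : IsRay G f) (hP : P.Finite)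
    (hsep : ∀ p ∈ P, FinitelySeparated G f p) :
    ∃ S : Set V, S.Finite ∧ Disjoint P (rayComp G f S ∪ S) ∧
      ∀ s ∈ S, ∃ p ∈ P, p ∈ rayComp G f (S \ {s}) := by
  classical
  obtain ⟨S₀, hS₀⟩ := hf.exists_finset_disjoint_rayComp_union hP hsep
  obtain ⟨S, -, hS, hmin⟩ := exists_minimal_le_of_wellFoundedLT
    (fun S : Finset V => Disjoint P (rayComp G f S ∪ S)) S₀ hS₀
  refine ⟨S, S.finite_toSet, hS, fun s hs => ?_⟩
  by_contra! hno
  have herase : Disjoint P (rayComp G f (S.erase s) ∪ S.erase s) := by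
    rw [Finset.coe_erase, Set.disjoint_union_right]
    exact ⟨Set.disjoint_left.2 hno,
      hS.mono_right (Set.sdiff_subset.trans Set.subset_union_right)⟩
  exact S.notMem_erase s (hmin herase (S.erase_subset s) hs)

/-- A region of the ray `f`: a connected set with finite nonempty vertex-boundary whose interior
contains a tail of `f`. -/
structure IsRayRegion (G : SimpleGraph V) (f : ℕ → V) (B : Set V) : Prop where
  connected : (G.induce B).Connected
  finite_vBoundary : (vBoundary G B).Finite
  nonempty_vBoundary : (vBoundary G B).Nonempty
  eventually_mem : ∀ᶠ n in atTop, f n ∈ B \ vBoundary G B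

theorem IsRay.exists_isRayRegion (hf : IsRay G f) (hP : P.Finite)
    (hsep : ∀ p ∈ P, FinitelySeparated G f p) (hne : (P ∩ rayComp G f ∅).Nonempty) :
    ∃ B, IsRayRegion G f B ∧ Disjoint P B ∧
      ∀ s ∈ vBoundary G B, ∃ p ∈ P, p ∈ rayComp G f (vBoundary G B \ {s}) := by
  obtain ⟨S, hS, hdisj, hmin⟩ := hf.exists_minimal_disjoint_rayComp_union hP hsep
  have hboundary : ∀ s ∈ S,
      s ∈ vBoundary G (rayComp G f S)ᶜ ∧ s ∈ vBoundary G (rayComp G f S ∪ S) := by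
    intro s hs
    obtain ⟨p, hp, hps⟩ := hmin s hs
    exact hf.mem_vBoundary_of_mem_rayComp_sdiff hS (hdisj.notMem_of_mem_left hp) hps
  have hbdry : vBoundary G (rayComp G f S ∪ S) = S :=
    vBoundary_rayComp_union_subset.antisymm fun s hs => (hboundary s hs).2
  refine ⟨rayComp G f S ∪ S, ⟨?_, ?_, ?_, ?_⟩, hdisj, ?_⟩ <;> try rw [hbdry]
  · exact hf.induce_rayComp_union_connected hS fun s hs => (hboundary s hs).1
  · exact hS
  · obtain ⟨p, hp, hp₀⟩ := hne
    by_contra hempty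
    rw [Set.not_nonempty_iff_eq_empty.1 hempty] at hdisj
    exact hdisj.notMem_of_mem_left hp (.inl hp₀)
  · filter_upwards [hf.eventually_mem_rayComp hS] with n hn
    exact ⟨.inl hn, notMem_of_mem_rayComp hn⟩
  · exact hmin

namespace IsRayRegion

theorem subset_sdiff_vBoundary (hA : IsRayRegion G f A) (hB : IsRayRegion G f B)
    (hAB : Disjoint (vBoundary G A) B) : B ⊆ A \ vBoundary G A := by
  intro x hx
  obtain ⟨n, hnA, hnB⟩ := (hA.eventually_mem.and hB.eventually_mem).exists
  refine ⟨?_, hAB.notMem_of_mem_right hx⟩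
  exact ((induce_connected_iff.1 hB.connected).2 _ hnB.1 x hx).mem_of_vBoundary_subset
    hAB.subset_compl_right hnA.1

theorem sepVertsEndsIn (hA : IsRayRegion G f A) (hAB : Disjoint (vBoundary G A) B) :
    SepVertsEndsIn G (vBoundary G A) (vBoundary G B) B := by
  refine ⟨fun hsub => ?_, fun v hv g _ hgB n _ hreach => ?_⟩
  · obtain ⟨a, ha⟩ := hA.nonempty_vBoundary
    exact hAB.notMem_of_mem_left ha (hsub ha).1
  · exact hAB.notMem_of_mem_left hv
      (hreach.symm.mem_of_vBoundary_subset subset_rfl (hgB ⟨n, rfl⟩))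

theorem exists_next (hf : IsRay G f) (hA : IsRayRegion G f A)
    (hsep : ∀ v, FinitelySeparated G f v) :
    ∃ B, IsRayRegion G f B ∧ B ⊆ A \ vBoundary G A ∧
      MinSepVertsEndsIn G (vBoundary G A) (vBoundary G B) B := by
  obtain ⟨a, ha⟩ := hA.nonempty_vBoundary
  have ha₀ : a ∈ rayComp G f ∅ := hA.eventually_mem.mono fun n hn =>
    ((induce_connected_iff.1 hA.connected).2 a ha.1 _ hn.1).mono (Set.empty_subset _)
  obtain ⟨B, hB, hAB, hmin⟩ :=
    hf.exists_isRayRegion hA.finite_vBoundary (fun p _ => hsep p) ⟨a, ha, ha₀⟩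
  refine ⟨B, hB, hA.subset_sdiff_vBoundary hB hAB, hA.sepVertsEndsIn hAB, ?_⟩
  rintro S ⟨hSB, hBS⟩ ⟨-, hS⟩
  obtain ⟨s, hs, hsS⟩ := Set.not_subset.1 hBS
  obtain ⟨p, hp, hpC⟩ := hmin s hs
  obtain ⟨N, hN⟩ := eventually_atTop.1 (hB.eventually_mem.and hpC)
  refine hS p hp _ (hf.tail N) ?_ 0 (fun n _ hn => ?_) ?_
  · rintro _ ⟨n, rfl⟩
    exact (hN (N + n) (by omega)).1.1
  · exact (hN (N + n) (by omega)).1.2 (hSB hn)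
  · have hS' : S ⊆ vBoundary G B \ {s} := fun x hx => ⟨hSB hx, fun hxs => hsS (hxs ▸ hx)⟩
    exact (hN (N + 0) (by omega)).2.mono hS'

theorem exists_seq (hf : IsRay G f) (hA : IsRayRegion G f A)
    (hsep : ∀ v, FinitelySeparated G f v) :
    ∃ B : ℕ → Set V, StrictAnti B ∧ B 0 = A ∧ (∀ i, IsRayRegion G f (B i)) ∧
      (∀ i, B (i + 1) ⊆ B i \ vBoundary G (B i)) ∧
      ∀ i, MinSepVertsEndsIn G (vBoundary G (B i)) (vBoundary G (B (i + 1))) (B (i + 1)) := by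
  choose next hnext hsub hminsep using fun B : {B // IsRayRegion G f B} => B.2.exists_next hf hsep
  let B (i : ℕ) : {B // IsRayRegion G f B} := (fun B => ⟨next B, hnext B⟩)^[i] ⟨A, hA⟩
  have hsucc (i : ℕ) : (B (i + 1) : Set V) = next (B i) := by
    simp only [B, Function.iterate_succ_apply']
  refine ⟨fun i => B i, strictAnti_nat_of_succ_lt fun i => ?_, rfl, fun i => (B i).2,
    fun i => by simpa only [hsucc] using hsub (B i),
    fun i => by simpa only [hsucc] using hminsep (B i)⟩
  obtain ⟨a, ha⟩ := (B i).2.nonempty_vBoundary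
  rw [hsucc]
  exact ⟨(hsub _).trans Set.sdiff_subset, fun h => (hsub _ (h ha.1)).2 ha⟩

end IsRayRegion

end Regions

section Degrees

variable {G : SimpleGraph V} {A F T : Set V}

theorem coe_encard_coe (s : Finset W) :
    (((s : Set W).encard : ℝ≥0∞) : EReal) = ((s.card : ℝ) : EReal) := by
  rw [Set.encard_coe_eq_coe_finsetCard, ENat.toENNReal_coe]
  rfl

theorem coe_encard_le_coe_encard {s t : Set W} (h : s ⊆ t) :
    ((s.encard : ℝ≥0∞) : EReal) ≤ ((t.encard : ℝ≥0∞) : EReal) :=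
  EReal.coe_ennreal_le_coe_ennreal_iff.2 (ENat.toENNReal_le.2 (Set.encard_le_encard h))

theorem coe_lt_encard_iff {s : Set W} {c : ℝ} :
    (c : EReal) < ((s.encard : ℝ≥0∞) : EReal) ↔ ∃ t : Finset W, ↑t ⊆ s ∧ c < t.card := by
  refine ⟨fun h => ?_, fun ⟨t, hts, ht⟩ => ?_⟩
  · rcases s.finite_or_infinite with hs | hs
    · lift s to Finset W using hs
      exact ⟨s, subset_rfl, EReal.coe_lt_coe_iff.1 (coe_encard_coe s ▸ h)⟩
    · obtain ⟨n, hn⟩ := exists_nat_gt c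
      obtain ⟨t, hts, rfl⟩ := hs.exists_subset_card_eq n
      exact ⟨t, hts, hn⟩
  · calc (c : EReal) < ((t.card : ℝ) : EReal) := EReal.coe_lt_coe_iff.2 ht
      _ = (((t : Set W).encard : ℝ≥0∞) : EReal) := (coe_encard_coe t).symm
      _ ≤ ((s.encard : ℝ≥0∞) : EReal) := coe_encard_le_coe_encard hts

theorem coe_sub_mul_lt_encard {s : Set W} {c : ℝ} {d n : ℕ} (hn : n ≠ 0)
    (h : (c : EReal) < ((d + (s.encard : ℝ≥0∞) / n : ℝ≥0∞) : EReal)) :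
    (((c - d) * n : ℝ) : EReal) < ((s.encard : ℝ≥0∞) : EReal) := by
  rcases s.finite_or_infinite with hs | hs
  · lift s to Finset W using hs
    have hn' : (0 : ℝ) < n := by positivity
    have hreal : ((d + ((s : Set W).encard : ℝ≥0∞) / n : ℝ≥0∞) : EReal)
        = ((d + s.card / n : ℝ) : EReal) := by
      have hofReal : (d + ((s : Set W).encard : ℝ≥0∞) / n : ℝ≥0∞)
          = ENNReal.ofReal (d + s.card / n) := by
        rw [ENNReal.ofReal_add (by positivity) (by positivity), ENNReal.ofReal_div_of_pos hn']
        simp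
      rw [hofReal, EReal.coe_ennreal_ofReal, max_eq_left (by positivity)]
    rwa [hreal, EReal.coe_lt_coe_iff, ← sub_lt_iff_lt_add', lt_div_iff₀ hn',
      ← EReal.coe_lt_coe_iff, ← coe_encard_coe] at h
  · rw [hs.encard_eq]
    exact EReal.coe_lt_top _

theorem avgDegIn_coe (F : Finset V) :
    avgDegIn G A F = (∑ v ∈ F, ((G.neighborSet v ∩ A).ncard : ℝ)) / F.card := by
  rw [avgDegIn, finsum_mem_coe_finset, Set.ncard_coe_finset]

theorem avgDegIn_le_avgDegIn (hF : F.Finite) (hA : A.Finite)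
    (hT : ∀ v ∈ F, G.neighborSet v ∩ T ⊆ A) : avgDegIn G T F ≤ avgDegIn G A F := by
  lift F to Finset V using hF
  rw [avgDegIn_coe, avgDegIn_coe]
  gcongr ?_ / _
  refine Finset.sum_le_sum fun v hv => Nat.cast_le.2 (Set.ncard_le_ncard ?_ (hA.inter_of_right _))
  exact Set.subset_inter Set.inter_subset_left (hT v hv)

theorem avgDegIn_induce {s : Set V} (T F : Set s) :
    avgDegIn (G.induce s) T F = avgDegIn G (Subtype.val '' T) (Subtype.val '' F) := by
  have hN (v : s) : G.neighborSet v ∩ Subtype.val '' T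
      = Subtype.val '' ((G.induce s).neighborSet v ∩ T) := by
    ext x
    simp only [Set.mem_inter_iff, Set.mem_image]
    constructor
    · rintro ⟨hx, y, hy, rfl⟩
      exact ⟨y, ⟨hx, hy⟩, rfl⟩
    · rintro ⟨y, ⟨hxy, hy⟩, rfl⟩
      exact ⟨hxy, y, hy, rfl⟩
  rw [avgDegIn, avgDegIn, finsum_mem_image Subtype.val_injective.injOn,
    Set.ncard_image_of_injective F Subtype.val_injective]
  simp only [hN, Set.ncard_image_of_injective _ Subtype.val_injective]

theorem card_le_sum_ncard_neighborSet_inter {F : Finset V} (hF : vBoundary G A = F) (hT : T.Finite)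
    {E : Finset (Sym2 V)} (hE : ↑E ⊆ eBoundary G A) (hET : ∀ e ∈ E, ∀ y ∈ e, y ∉ A → y ∈ T) :
    E.card ≤ ∑ x ∈ F, (G.neighborSet x ∩ T).ncard := by
  have hfin (x : V) : (G.neighborSet x ∩ T).Finite := hT.inter_of_right _
  have hcover : (E : Set (Sym2 V)) ⊆ ⋃ x ∈ F, (fun y => s(x, y)) '' (G.neighborSet x ∩ T) := by
    intro e he
    obtain ⟨x, y, hx, hy, hxy, rfl⟩ := hE he
    have hxF : x ∈ F := Finset.mem_coe.1 (hF ▸ ⟨hx, y, hy, hxy⟩)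
    exact Set.mem_biUnion hxF ⟨y, ⟨hxy, hET _ he y (Sym2.mem_mk_right x y) hy⟩, rfl⟩
  calc E.card = (E : Set (Sym2 V)).ncard := (Set.ncard_coe_finset E).symm
    _ ≤ (⋃ x ∈ F, (fun y => s(x, y)) '' (G.neighborSet x ∩ T)).ncard :=
        Set.ncard_le_ncard hcover (F.finite_toSet.biUnion fun x _ => (hfin x).image _)
    _ ≤ ∑ x ∈ F, ((fun y => s(x, y)) '' (G.neighborSet x ∩ T)).ncard :=
        F.set_ncard_biUnion_le _
    _ ≤ ∑ x ∈ F, (G.neighborSet x ∩ T).ncard :=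
        Finset.sum_le_sum fun x _ => Set.ncard_image_le (hfin x)

theorem exists_finite_lt_avgDegIn_vBoundary (hfin : (vBoundary G A).Finite)
    (hne : (vBoundary G A).Nonempty) {c : ℝ} {d : ℕ}
    (h : (c : EReal) < ((d + bratio G A : ℝ≥0∞) : EReal)) :
    ∃ T : Set V, T.Finite ∧ Disjoint T A ∧ (∀ t ∈ T, ∃ x ∈ vBoundary G A, G.Adj x t) ∧
      c - d < avgDegIn G T (vBoundary G A) := by
  classical
  obtain ⟨F, hF⟩ := hfin.exists_finset_coe
  have hcard : F.card ≠ 0 := by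
    rw [← hF] at hne
    exact (Finset.card_pos.2 (Finset.coe_nonempty.1 hne)).ne'
  rw [bratio, ← hF, Set.encard_coe_eq_coe_finsetCard, ENat.toENNReal_coe] at h
  obtain ⟨E, hE, hcE⟩ := coe_lt_encard_iff.1 (coe_sub_mul_lt_encard hcard h)
  have hTfin : (↑(E.biUnion Sym2.toFinset) \ A).Finite := (Finset.finite_toSet _).sdiff
  refine ⟨_, hTfin, Set.disjoint_sdiff_left, fun t ⟨ht, htA⟩ => ?_, ?_⟩
  · obtain ⟨e, he, hte⟩ := Finset.mem_biUnion.1 ht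
    obtain ⟨x, y, hx, hy, hxy, rfl⟩ := hE he
    obtain rfl : t = y :=
      (Sym2.mem_iff.1 (Sym2.mem_toFinset.1 hte)).resolve_left fun htx => htA (htx ▸ hx)
    exact ⟨x, ⟨hx, t, hy, hxy⟩, hxy⟩
  · rw [← hF, avgDegIn_coe, lt_div_iff₀ (by positivity)]
    refine hcE.trans_le ?_
    exact_mod_cast card_le_sum_ncard_neighborSet_inter hF.symm hTfin hE
      fun e he y hy hyA =>
        ⟨Finset.mem_biUnion.2 ⟨e, he, Sym2.mem_toFinset.2 hy⟩, hyA⟩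

end Degrees

section RelativeDegree

variable {G : SimpleGraph V} {r : ℕ → V} {A : ℕ → Set ((Dom G r)ᶜ : Set V)}

theorem Converges.relDegree_le (hA : Converges G r A) :
    relDegree G r ≤ ⨆ i, ((Dom G r).encard + bratio (Gmin G r) (A i) : ℝ≥0∞) := by
  rw [relDegree, ← ENNReal.add_iSup]
  split_ifs with h
  · exact le_self_add
  · gcongr
    calc ⨅ B : {B // Converges G r B}, Filter.atTop.liminf fun i => bratio (Gmin G r) (B.1 i)
      _ ≤ Filter.atTop.liminf fun i => bratio (Gmin G r) (A i) :=
          iInf_le _ (⟨A, hA⟩ : {B // Converges G r B})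
      _ ≤ ⨆ i, bratio (Gmin G r) (A i) := Filter.liminf_le_of_frequently_le'
          (Filter.Frequently.of_forall fun i => le_iSup (fun i => bratio (Gmin G r) (A i)) i)

theorem Converges.exists_lt_add_bratio (hA : Converges G r A) {c : ℝ}
    (hc : (c : EReal) < relDegree G r) :
    ∃ i, (c : EReal) < (((Dom G r).encard + bratio (Gmin G r) (A i) : ℝ≥0∞) : EReal) := by
  by_contra! hle
  have hc₀ : 0 ≤ (c : EReal) := (EReal.coe_ennreal_nonneg _).trans (hle 0)
  generalize (c : EReal) = c at hc hle hc₀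
  lift c to ℝ≥0∞ using hc₀
  simp only [EReal.coe_ennreal_le_coe_ennreal_iff, EReal.coe_ennreal_lt_coe_ennreal_iff] at hc hle
  exact hc.not_ge (hA.relDegree_le.trans (iSup_le hle))

end RelativeDegree

section DeletedEnd

open Filter

variable {G : SimpleGraph V} {r : ℕ → V}

theorem FinitelySeparated.induce {s : Set V} {g : ℕ → s} (hr : IsRay G r) {N : ℕ}
    (hg : ∀ n, (g n : V) = r (N + n)) {v : s} (hv : FinitelySeparated G r v) :
    FinitelySeparated (G.induce s) g v := by
  obtain ⟨S, hS, hvS, hvC⟩ := hv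
  refine ⟨Subtype.val ⁻¹' S, hS.preimage Subtype.val_injective.injOn, hvS, fun hvg => hvC ?_⟩
  have htail : ∀ᶠ n in atTop, (g n : V) ∈ rayComp G r S := by
    simp only [hg]
    exact (tendsto_add_atTop_nat N).eventually (hr.eventually_mem_rayComp hS) |>.mono
      fun n hn => by rwa [add_comm]
  obtain ⟨n, hvn, hn⟩ := (hvg.and htail).exists
  exact (hvn.of_induce.mono Set.subset_union_left).mem_rayComp hn

theorem IsRay.inDeletedEnd (hr : IsRay G r) {f : ℕ → ((Dom G r)ᶜ : Set V)}
    (hf : IsRay (Gmin G r) f) {N : ℕ} (hfr : ∀ n, (f n : V) = r (N + n)) : InDeletedEnd G r f := by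
  refine ⟨hf, fun S hS => ?_⟩
  obtain ⟨M, hM⟩ := eventually_atTop.1 (hr.eventually_notMem hS)
  exact ⟨M, N + M, by simpa only [hfr] using ReachAvoid.refl (hM (N + M) (by omega))⟩

theorem IsRay.exists_converges (hr : IsRay G r) (hD : (Dom G r).Finite) {P : Set V}
    (hP : P.Finite) :
    ∃ (N : ℕ) (f : ℕ → ((Dom G r)ᶜ : Set V)) (A : ℕ → Set ((Dom G r)ᶜ : Set V)),
      (∀ n, (f n : V) = r (N + n)) ∧ Converges G r A ∧
        ∀ i, IsRayRegion (Gmin G r) f (A i) ∧ Disjoint P (Subtype.val '' A i) := by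
  obtain ⟨N, f, hf, hfr⟩ := hr.exists_induce_tail (U := (Dom G r)ᶜ) (hr.eventually_notMem hD)
  have hsep (v) : FinitelySeparated (Gmin G r) f v := by
    refine .induce hr hfr ?_
    by_contra hv
    exact v.2 (hr.dominatesRay_of_not_finitelySeparated hv)
  obtain ⟨B, hB, hPB, -⟩ := hf.exists_isRayRegion (P := insert (f 0) (Subtype.val ⁻¹' P))
    ((hP.preimage Subtype.val_injective.injOn).insert _) (fun p _ => hsep p)
    ⟨f 0, .inl rfl, .of_forall fun n => hf.reachAvoid (N := 0) (by simp) le_rfl n.zero_le⟩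
  obtain ⟨A, hanti, rfl, hA, hsub, hminsep⟩ := hB.exists_seq hf hsep
  refine ⟨N, f, A, hfr, ⟨hanti.injective, fun i => ?_, hsub, hminsep⟩, fun i => ⟨hA i, ?_⟩⟩
  · obtain ⟨M, hM⟩ := eventually_atTop.1 (hA i).eventually_mem
    refine ⟨(hA i).connected, (hA i).finite_vBoundary, _,
      hr.inDeletedEnd (hf.tail M) (N := N + M) fun n => by rw [hfr, add_assoc], ?_⟩
    rintro _ ⟨n, rfl⟩
    exact (hM (M + n) (by omega)).1
  · rw [Set.disjoint_right]
    rintro _ ⟨x, hx, rfl⟩ hxP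
    exact hPB.notMem_of_mem_left (.inr hxP) (hanti.antitone i.zero_le hx)

/-- `R` is a connected set cutting off the end of the ray `r`: only dominating vertices of the end
and neighbours of the finite set `F ⊆ R` lie around `R`, and the finite set `T` of neighbours of `F`
outside `R` already gives `F` average degree more than `q`. -/
structure IsEndCut (G : SimpleGraph V) (r : ℕ → V) (q : ℝ) (R F T : Set V) : Prop where
  connected : (G.induce R).Connected
  subset : F ⊆ R
  finite : F.Finite
  nonempty : F.Nonempty
  disjoint_dom : Disjoint (Dom G r) R
  mem_dom_of_adj : ∀ x ∈ R \ F, ∀ y ∉ R, G.Adj x y → y ∈ Dom G r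
  eventually_mem : ∀ᶠ n in atTop, r n ∈ R \ F
  finite_outer : T.Finite
  disjoint_outer : Disjoint T R
  exists_adj_of_outer : ∀ t ∈ T, ∃ x ∈ F, G.Adj x t
  lt_avgDegIn : q < avgDegIn G T F

theorem IsRayRegion.isEndCut {f : ℕ → ((Dom G r)ᶜ : Set V)} {A T : Set ((Dom G r)ᶜ : Set V)}
    (hA : IsRayRegion (Gmin G r) f A) {N : ℕ} (hfr : ∀ n, (f n : V) = r (N + n)) {q : ℝ}
    (hT : T.Finite) (hTA : Disjoint T A)
    (hadj : ∀ t ∈ T, ∃ x ∈ vBoundary (Gmin G r) A, (Gmin G r).Adj x t)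
    (hq : q < avgDegIn (Gmin G r) T (vBoundary (Gmin G r) A)) :
    IsEndCut G r q (Subtype.val '' A) (Subtype.val '' vBoundary (Gmin G r) A)
      (Subtype.val '' T) where
  connected := induce_image_val_connected hA.connected
  subset := Set.image_mono fun x hx => hx.1
  finite := hA.finite_vBoundary.image _
  nonempty := hA.nonempty_vBoundary.image _
  disjoint_dom := by
    rw [Set.disjoint_right]
    rintro _ ⟨x, -, rfl⟩
    exact x.2
  mem_dom_of_adj := by
    rintro _ ⟨⟨x, hx, rfl⟩, hxF⟩ y hy hxy
    by_contra hyD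
    exact hxF ⟨x, ⟨hx, ⟨y, hyD⟩, fun hyA => hy ⟨_, hyA, rfl⟩, hxy⟩, rfl⟩
  eventually_mem := by
    rw [← Set.image_sdiff Subtype.val_injective, ← eventually_map (m := r),
      ← map_add_atTop_eq_nat N, map_map, eventually_map]
    filter_upwards [hA.eventually_mem] with n hn
    exact ⟨f n, hn, by rw [hfr, add_comm]; rfl⟩
  finite_outer := hT.image _
  disjoint_outer := (Set.disjoint_image_iff Subtype.val_injective).2 hTA
  exists_adj_of_outer := by
    rintro _ ⟨t, ht, rfl⟩
    obtain ⟨x, hx, hxt⟩ := hadj t ht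
    exact ⟨x, ⟨x, hx, rfl⟩, hxt⟩
  lt_avgDegIn := hq.trans_eq (avgDegIn_induce T _)

theorem IsRay.exists_isEndCut (hr : IsRay G r) (hD : (Dom G r).Finite) {m : ℝ}
    (hm : (m : EReal) < relDegree G r) {P : Set V} (hP : P.Finite) :
    ∃ R F T, IsEndCut G r (m - (Dom G r).ncard) R F T ∧ Disjoint P R := by
  obtain ⟨N, f, A, hfr, hconv, hA⟩ := hr.exists_converges hD hP
  obtain ⟨i, hi⟩ := hconv.exists_lt_add_bratio hm
  rw [← hD.cast_ncard_eq, ENat.toENNReal_coe] at hi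
  obtain ⟨T, hT, hTA, hadj, hq⟩ :=
    exists_finite_lt_avgDegIn_vBoundary (hA i).1.finite_vBoundary (hA i).1.nonempty_vBoundary hi
  exact ⟨_, _, _, (hA i).1.isEndCut hfr hT hTA hadj hq, (hA i).2⟩

end DeletedEnd

section Konig

open Relation

variable {r : V → V → Prop}

theorem eq_or_exists_of_reflTransGen_avoiding {S : Set V} {v w : V}
    (h : ReflTransGen (fun a b => r a b ∧ b ∉ S) v w) :
    w = v ∨ ∃ u, r v u ∧ u ∉ insert v S ∧
      ReflTransGen (fun a b => r a b ∧ b ∉ insert v S) u w := by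
  induction h with
  | refl => exact .inl rfl
  | @tail b c _ hbc ih =>
    by_cases hcv : c = v
    · exact .inl hcv
    have hc : c ∉ insert v S := by simp [hcv, hbc.2]
    obtain rfl | ⟨u, hvu, hu, hub⟩ := ih
    · exact .inr ⟨c, hbc.1, hc, .refl⟩
    · exact .inr ⟨u, hvu, hu, hub.tail ⟨hbc.1, hc⟩⟩

theorem exists_infinite_reflTransGen_avoiding {S : Set V} {v : V} (hr : {w | r v w}.Finite)
    (h : {w | ReflTransGen (fun a b => r a b ∧ b ∉ S) v w}.Infinite) :
    ∃ u, r v u ∧ u ∉ insert v S ∧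
      {w | ReflTransGen (fun a b => r a b ∧ b ∉ insert v S) u w}.Infinite := by
  by_contra! hfin
  have hunion : (⋃ u ∈ {u | r v u ∧ u ∉ insert v S},
      {w | ReflTransGen (fun a b => r a b ∧ b ∉ insert v S) u w}).Finite :=
    (hr.subset fun u hu => hu.1).biUnion fun u hu => hfin u hu.1 hu.2
  refine h ((hunion.insert v).subset fun w hw => ?_)
  obtain rfl | ⟨u, hvu, hu, huw⟩ := eq_or_exists_of_reflTransGen_avoiding hw
  · exact .inl rfl
  · exact .inr (Set.mem_biUnion ⟨hvu, hu⟩ huw)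

theorem exists_injective_seq_of_infinite_reflTransGen (hr : ∀ v, {w | r v w}.Finite) {v : V}
    (h : {w | ReflTransGen r v w}.Infinite) :
    ∃ f : ℕ → V, Function.Injective f ∧ ∀ n, r (f n) (f (n + 1)) := by
  let State := {s : Set V × V // {w | ReflTransGen (fun a b => r a b ∧ b ∉ s.1) s.2 w}.Infinite}
  choose next hnext havoid hinf using
    fun s : State => exists_infinite_reflTransGen_avoiding (hr s.1.2) s.2
  let s (n : ℕ) : State :=
    (fun s => ⟨(insert s.1.2 s.1.1, next s), hinf s⟩)^[n] ⟨(∅, v), by simpa using h⟩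
  have hsucc (n : ℕ) : (s (n + 1)).1 = (insert (s n).1.2 (s n).1.1, next (s n)) := by
    simp only [s, Function.iterate_succ_apply']
  have hmono : Monotone fun n => (s n).1.1 := monotone_nat_of_le_succ fun n => by
    simp only [hsucc]
    exact Set.subset_insert _ _
  refine ⟨fun n => (s n).1.2, Function.Injective.of_lt_imp_ne fun a b hab heq => ?_, fun n => ?_⟩
  · obtain ⟨b, rfl⟩ := Nat.exists_eq_succ_of_ne_zero (Nat.ne_zero_of_lt hab)
    have hnotMem : (s (b + 1)).1.2 ∉ (s (b + 1)).1.1 := by simpa only [hsucc] using havoid (s b)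
    refine hnotMem (hmono (Nat.succ_le_of_lt hab) ?_)
    simp only [hsucc a, ← heq]
    exact Set.mem_insert _ _
  · simpa only [hsucc] using hnext (s n)

theorem exists_finite_closed_of_forall_isRay {G : SimpleGraph V} {N : V → Set V}
    (hN : ∀ v, (N v).Finite) (hray : ∀ f, IsRay G f → ∃ n, f (n + 1) ∉ N (f n)) {X : Set V}
    (hX : X.Finite) :
    ∃ B, B.Finite ∧ X ⊆ B ∧ ∀ v ∈ B, ∀ w ∈ N v, G.Adj v w → w ∈ B := by
  let r (v w : V) : Prop := w ∈ N v ∧ G.Adj v w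
  refine ⟨⋃ x ∈ X, {w | ReflTransGen r x w}, hX.biUnion fun x _ => ?_,
    fun x hx => Set.mem_biUnion hx .refl, fun v hv w hw hvw => ?_⟩
  · by_contra hinf
    obtain ⟨f, hf, hadj⟩ := exists_injective_seq_of_infinite_reflTransGen
      (fun v => (hN v).subset fun w hw => hw.1) hinf
    obtain ⟨n, hn⟩ := hray f ⟨hf, fun n => (hadj n).2⟩
    exact hn (hadj n).1
  · obtain ⟨x, hx, hxv⟩ := Set.mem_iUnion₂.1 hv
    exact Set.mem_biUnion hx (hxv.tail ⟨hw, hvw⟩)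

end Konig

/-- A stage in the construction of the subgraph: the vertices in `kept` are to stay, and all other
vertices of the members of `regions` are to be deleted. -/
structure Cutoff (V : Type*) where
  kept : Set V
  regions : Set (Set V)

namespace Cutoff

variable {G : SimpleGraph V} {c d : Cutoff V} {R : Set V}

/-- The vertices deleted at the stage `c`. -/
def removed (c : Cutoff V) : Set V := ⋃₀ c.regions \ c.kept

/-- A later stage has more kept vertices and more regions, but does not keep any further vertices
of the regions that are already present. -/
instance : Preorder (Cutoff V) where
  le c d := c.kept ⊆ d.kept ∧ c.regions ⊆ d.regions ∧ ∀ R ∈ c.regions, R ∩ d.kept ⊆ c.kept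
  le_refl c := ⟨subset_rfl, subset_rfl, fun _ _ => Set.inter_subset_right⟩
  le_trans c d e hcd hde := ⟨hcd.1.trans hde.1, hcd.2.1.trans hde.2.1, fun R hR x hx =>
    hcd.2.2 R hR ⟨hx.1, hde.2.2 R (hcd.2.1 hR) hx⟩⟩

theorem inter_kept_eq_of_le (hcd : c ≤ d) (hR : R ∈ c.regions) : R ∩ d.kept = R ∩ c.kept :=
  (Set.subset_inter Set.inter_subset_left (hcd.2.2 R hR)).antisymm
    (Set.inter_subset_inter_right R hcd.1)

theorem removed_mono : Monotone (removed : Cutoff V → Set V) := by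
  rintro c d hcd x ⟨⟨R, hR, hxR⟩, hx⟩
  exact ⟨⟨R, hcd.2.1 hR, hxR⟩, fun hxd => hx (hcd.2.2 R hR ⟨hxR, hxd⟩)⟩

theorem mem_removed_iff_of_mem {x : V} (hR : R ∈ c.regions) (hx : x ∈ R) :
    x ∈ c.removed ↔ x ∉ c.kept :=
  ⟨fun h => h.2, fun h => ⟨⟨R, hR, hx⟩, h⟩⟩

/-- The limit of an increasing sequence of stages. -/
def iUnion (c : ℕ → Cutoff V) : Cutoff V where
  kept := ⋃ i, (c i).kept
  regions := ⋃ i, (c i).regions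

theorem le_iUnion {c : ℕ → Cutoff V} (hc : Monotone c) (i : ℕ) : c i ≤ iUnion c := by
  refine ⟨Set.subset_iUnion (fun i => (c i).kept) i, Set.subset_iUnion (fun i => (c i).regions) i,
    fun R hR x hx => ?_⟩
  obtain ⟨j, hj⟩ := Set.mem_iUnion.1 hx.2
  exact (hc (le_max_left i j)).2.2 R hR ⟨hx.1, (hc (le_max_right i j)).1 hj⟩

/-- The stage after `c` at which the vertices in `E` are kept and `R` is a further region. -/
def extend (c : Cutoff V) (R E : Set V) : Cutoff V where
  kept := c.kept ∪ E
  regions := insert R c.regions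

theorem le_extend {E : Set V} (hE : Disjoint E c.removed) : c ≤ c.extend R E := by
  refine ⟨Set.subset_union_left, Set.subset_insert _ _, ?_⟩
  rintro S hS x ⟨hxS, hx | hx⟩
  · exact hx
  · by_contra hxk
    exact hE.notMem_of_mem_left hx ⟨⟨S, hS, hxS⟩, hxk⟩

/-- The invariants of the construction. Every region is connected and meets the kept set in a finite
nonempty set, whose average degree into some finite set of kept vertices is more than `q`. Vertices
outside all regions are adjacent to a removed vertex only if they are kept and have more than `m`
kept neighbours. -/
structure IsAdmissible (G : SimpleGraph V) (m q : ℝ) (c : Cutoff V) : Prop where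
  pairwiseDisjoint : c.regions.PairwiseDisjoint id
  connected : ∀ R ∈ c.regions, (G.induce R).Connected
  finite_inter : ∀ R ∈ c.regions, (R ∩ c.kept).Finite
  nonempty_inter : ∀ R ∈ c.regions, (R ∩ c.kept).Nonempty
  exists_lt_avgDegIn : ∀ R ∈ c.regions, ∃ T ⊆ c.kept, T.Finite ∧ q < avgDegIn G T (R ∩ c.kept)
  mem_kept_of_adj : ∀ x ∈ c.removed, ∀ y ∉ ⋃₀ c.regions, G.Adj x y →
    y ∈ c.kept ∧ (m : EReal) < ((G.neighborSet y ∩ c.kept).encard : ℝ≥0∞)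

variable {m q : ℝ}

namespace IsAdmissible

theorem vBoundary_compl_removed_subset (hc : c.IsAdmissible G m q) :
    vBoundary G c.removedᶜ ⊆ c.kept := by
  intro y hy
  obtain ⟨hyr, x, hx, hyx⟩ := mem_vBoundary_compl.1 hy
  by_contra hyk
  exact hyk (hc.mem_kept_of_adj x hx y (fun hyR => hyr ⟨hyR, hyk⟩) hyx.symm).1

theorem of_regions_eq_empty (hc : c.regions = ∅) : c.IsAdmissible G m q := by
  constructor <;> simp [removed, hc]

theorem iUnion {c : ℕ → Cutoff V} (hmono : Monotone c) (hc : ∀ i, (c i).IsAdmissible G m q) :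
    (iUnion c).IsAdmissible G m q := by
  have hkept {i R} (hR : R ∈ (c i).regions) : R ∩ (Cutoff.iUnion c).kept = R ∩ (c i).kept :=
    inter_kept_eq_of_le (le_iUnion hmono i) hR
  refine ⟨?_, ?_, ?_, ?_, ?_, ?_⟩
  · intro R hR S hS hRS
    obtain ⟨i, hi⟩ := Set.mem_iUnion.1 hR
    obtain ⟨j, hj⟩ := Set.mem_iUnion.1 hS
    exact (hc (max i j)).pairwiseDisjoint ((hmono (le_max_left i j)).2.1 hi)
      ((hmono (le_max_right i j)).2.1 hj) hRS
  · exact fun R hR => (Set.mem_iUnion.1 hR).elim fun i hi => (hc i).connected R hi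
  · intro R hR
    obtain ⟨i, hi⟩ := Set.mem_iUnion.1 hR
    exact hkept hi ▸ (hc i).finite_inter R hi
  · intro R hR
    obtain ⟨i, hi⟩ := Set.mem_iUnion.1 hR
    exact hkept hi ▸ (hc i).nonempty_inter R hi
  · intro R hR
    obtain ⟨i, hi⟩ := Set.mem_iUnion.1 hR
    obtain ⟨T, hT, hTfin, hq⟩ := (hc i).exists_lt_avgDegIn R hi
    exact ⟨T, hT.trans (le_iUnion hmono i).1, hTfin, by rwa [hkept hi]⟩
  · rintro x ⟨⟨R, hR, hxR⟩, hx⟩ y hy hxy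
    obtain ⟨i, hi⟩ := Set.mem_iUnion.1 hR
    have hle := le_iUnion hmono i
    obtain ⟨hyk, hm⟩ := (hc i).mem_kept_of_adj x ⟨⟨R, hi, hxR⟩, fun h => hx (hle.1 h)⟩ y
      (fun h => hy (Set.sUnion_mono hle.2.1 h)) hxy
    exact ⟨hle.1 hyk, hm.trans_le
      (coe_encard_le_coe_encard (Set.inter_subset_inter_right _ hle.1))⟩

theorem extend (hc : c.IsAdmissible G m q) {E : Set V} (hR : (G.induce R).Connected)
    (hRk : Disjoint R c.kept) (hRr : Disjoint R c.removed) (hE : E.Finite)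
    (hEr : Disjoint E c.removed) (hne : (R ∩ E).Nonempty) {T : Set V} (hTE : T ⊆ E)
    (hq : q < avgDegIn G T (R ∩ E))
    (hadj : ∀ x ∈ R \ E, ∀ y ∉ R, G.Adj x y →
      y ∈ E ∧ (m : EReal) < ((G.neighborSet y ∩ E).encard : ℝ≥0∞)) :
    (c.extend R E).IsAdmissible G m q := by
  have hle : c ≤ c.extend R E := le_extend hEr
  have hRE : R ∩ (c.extend R E).kept = R ∩ E := by
    rw [Cutoff.extend, Set.inter_union_distrib_left, hRk.inter_eq, Set.empty_union]
  refine ⟨?_, ?_, ?_, ?_, ?_, ?_⟩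
  · refine hc.pairwiseDisjoint.insert fun S hS _ => Set.disjoint_left.2 fun x hxR hxS => ?_
    exact hRr.notMem_of_mem_left hxR ⟨⟨S, hS, hxS⟩, hRk.notMem_of_mem_left hxR⟩
  · exact Set.forall_mem_insert.2 ⟨hR, hc.connected⟩
  · refine Set.forall_mem_insert.2 ⟨hRE ▸ hE.inter_of_right R, fun S hS => ?_⟩
    exact inter_kept_eq_of_le hle hS ▸ hc.finite_inter S hS
  · refine Set.forall_mem_insert.2 ⟨hRE ▸ hne, fun S hS => ?_⟩
    exact inter_kept_eq_of_le hle hS ▸ hc.nonempty_inter S hS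
  · refine Set.forall_mem_insert.2
      ⟨⟨T, hTE.trans Set.subset_union_right, hE.subset hTE, by rwa [hRE]⟩, fun S hS => ?_⟩
    obtain ⟨T, hT, hTfin, hq⟩ := hc.exists_lt_avgDegIn S hS
    exact ⟨T, hT.trans hle.1, hTfin, by rwa [inter_kept_eq_of_le hle hS]⟩
  · rintro x ⟨⟨S, rfl | hS, hxS⟩, hx⟩ y hy hxy
    · have hyS : y ∉ S := fun h => hy ⟨S, Set.mem_insert _ _, h⟩
      obtain ⟨hyE, hm⟩ := hadj x ⟨hxS, fun h => hx (.inr h)⟩ y hyS hxy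
      exact ⟨.inr hyE, hm.trans_le
        (coe_encard_le_coe_encard (Set.inter_subset_inter_right _ Set.subset_union_right))⟩
    · obtain ⟨hyk, hm⟩ := hc.mem_kept_of_adj x ⟨⟨S, hS, hxS⟩, fun h => hx (.inl h)⟩ y
        (fun h => hy (Set.sUnion_mono hle.2.1 h)) hxy
      exact ⟨.inl hyk, hm.trans_le
        (coe_encard_le_coe_encard (Set.inter_subset_inter_right _ Set.subset_union_left))⟩

end IsAdmissible

end Cutoff

section Construction

open Filter

variable {G : SimpleGraph V} {r : ℕ → V} {U : Set V} {m : ℝ}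

theorem IsRay.exists_finite_lt_encard_inter (hr : IsRay G r) (hD : (Dom G r).Finite)
    (hU : (vBoundary G Uᶜ).Finite) (hrU : ∀ᶠ n in atTop, r n ∉ U) (m : ℝ) :
    ∃ Q : Set V, Q.Finite ∧ Disjoint Q U ∧
      ∀ v ∈ Dom G r, (m : EReal) < ((G.neighborSet v ∩ Q).encard : ℝ≥0∞) := by
  obtain ⟨M, hM⟩ := exists_nat_gt m
  have hinf : ∀ v ∈ Dom G r, ∃ t : Finset V, ↑t ⊆ G.neighborSet v \ U ∧ t.card = M :=
    fun v hv => (DominatesRay.infinite_neighborSet_sdiff hr hv hU hrU).exists_subset_card_eq M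
  choose! t ht hcard using hinf
  refine ⟨⋃ v ∈ Dom G r, t v, hD.biUnion fun v _ => (t v).finite_toSet, ?_, fun v hv => ?_⟩
  · simp only [Set.disjoint_iUnion_left]
    exact fun v hv => Set.disjoint_left.2 fun x hx => (ht v hv hx).2
  · exact coe_lt_encard_iff.2 ⟨t v, fun x hx => ⟨(ht v hv hx).1, Set.mem_biUnion hv hx⟩,
      by rwa [hcard v hv]⟩

namespace IsEndCut

variable {q : ℝ} {R F T : Set V}

theorem disjoint_of_vBoundary_compl_subset (h : IsEndCut G r q R F T)
    (hU : vBoundary G Uᶜ ⊆ Rᶜ) (hrU : ∀ᶠ n in atTop, r n ∉ U) : Disjoint R U := by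
  refine Set.disjoint_left.2 fun x hxR hxU => ?_
  obtain ⟨n, hnR, hnU⟩ := (h.eventually_mem.and hrU).exists
  exact hnU (((induce_connected_iff.1 h.connected).2 x hxR _ hnR.1).mem_of_vBoundary_compl_subset
    hU hxU)

theorem disjoint_outer_of_vBoundary_compl_subset (h : IsEndCut G r q R F T)
    (hU : vBoundary G Uᶜ ⊆ Rᶜ) (hrU : ∀ᶠ n in atTop, r n ∉ U) : Disjoint T U := by
  refine Set.disjoint_left.2 fun t ht htU => ?_
  obtain ⟨x, hx, hxt⟩ := h.exists_adj_of_outer t ht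
  have hxR : x ∈ R := h.subset hx
  have hxU : x ∉ U := (h.disjoint_of_vBoundary_compl_subset hU hrU).notMem_of_mem_left hxR
  exact hU (mem_vBoundary_compl.2 ⟨hxU, t, htU, hxt⟩) hxR

end IsEndCut

namespace Cutoff.IsAdmissible

variable {c : Cutoff V} {q : ℝ}

theorem exists_extend (hc : c.IsAdmissible G m q) (hck : c.kept.Finite) (hr : IsRay G r)
    (hD : (Dom G r).Finite) (hm : (m : EReal) < relDegree G r) (hq : q + (Dom G r).ncard ≤ m)
    (hrc : ∀ᶠ n in atTop, r n ∉ c.removed) :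
    ∃ R E, E.Finite ∧ c ≤ c.extend R E ∧ (c.extend R E).IsAdmissible G m q ∧
      ∀ᶠ n in atTop, r n ∈ (c.extend R E).removed := by
  have hbdry : (vBoundary G c.removedᶜ).Finite := hck.subset hc.vBoundary_compl_removed_subset
  obtain ⟨Q, hQ, hQr, hQm⟩ := hr.exists_finite_lt_encard_inter hD hbdry hrc m
  obtain ⟨R, F, T, hcut, hPR⟩ := hr.exists_isEndCut hD hm (hck.union hQ)
  rw [Set.disjoint_union_left] at hPR
  have hRbdry : vBoundary G c.removedᶜ ⊆ Rᶜ :=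
    hc.vBoundary_compl_removed_subset.trans hPR.1.subset_compl_right
  have hRr : Disjoint R c.removed := hcut.disjoint_of_vBoundary_compl_subset hRbdry hrc
  have hRE : R ∩ (Q ∪ Dom G r ∪ F ∪ T) = F := by
    simp only [Set.inter_union_distrib_left, hPR.2.symm.inter_eq, hcut.disjoint_dom.symm.inter_eq,
      hcut.disjoint_outer.symm.inter_eq, Set.inter_eq_self_of_subset_right hcut.subset,
      Set.empty_union, Set.union_empty]
  have hE : (Q ∪ Dom G r ∪ F ∪ T).Finite :=
    ((hQ.union hD).union hcut.finite).union hcut.finite_outer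
  have hEr : Disjoint (Q ∪ Dom G r ∪ F ∪ T) c.removed := by
    simp only [Set.disjoint_union_left]
    exact ⟨⟨⟨hQr, Set.disjoint_left.2 fun v hv =>
      DominatesRay.notMem_of_eventually_notMem hr hv hbdry hrc⟩, hRr.mono_left hcut.subset⟩,
      hcut.disjoint_outer_of_vBoundary_compl_subset hRbdry hrc⟩
  refine ⟨R, Q ∪ Dom G r ∪ F ∪ T, hE, le_extend hEr,
    hc.extend hcut.connected hPR.1.symm hRr hE hEr (by simpa only [hRE] using hcut.nonempty)
      (T := T) Set.subset_union_right ?_ fun x hx y hy hxy => ?_, ?_⟩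
  · rw [hRE]
    linarith [hcut.lt_avgDegIn]
  · have hyD : y ∈ Dom G r := hcut.mem_dom_of_adj x ⟨hx.1, fun h => hx.2 (.inl (.inr h))⟩ y hy hxy
    refine ⟨.inl (.inl (.inr hyD)), (hQm y hyD).trans_le (coe_encard_le_coe_encard ?_)⟩
    exact Set.inter_subset_inter_right _ fun x hx => .inl (.inl (.inl hx))
  · filter_upwards [hcut.eventually_mem] with n hn
    refine ⟨⟨R, Set.mem_insert _ _, hn.1⟩, ?_⟩
    rintro (h | h)
    · exact hPR.1.notMem_of_mem_left h hn.1
    · exact hn.2 (hRE ▸ ⟨hn.1, h⟩)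

theorem exists_eventually_mem_removed (hc : c.IsAdmissible G m q) (hck : c.kept.Finite)
    (hr : IsRay G r) (hD : (Dom G r).Finite) (hm : (m : EReal) < relDegree G r)
    (hq : q + (Dom G r).ncard ≤ m) :
    ∃ d, c ≤ d ∧ d.IsAdmissible G m q ∧ d.kept.Finite ∧ ∀ᶠ n in atTop, r n ∈ d.removed := by
  have hbdry : (vBoundary G c.removedᶜ).Finite := hck.subset hc.vBoundary_compl_removed_subset
  by_cases hin : ∃ᶠ n in atTop, r n ∈ c.removed
  · exact ⟨c, le_rfl, hc, hck, hr.eventually_mem_of_frequently_mem hbdry hin⟩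
  · obtain ⟨R, E, hE, hle, hadm, hrE⟩ :=
      hc.exists_extend hck hr hD hm hq (not_frequently.1 hin)
    exact ⟨_, hle, hadm, hck.union hE, hrE⟩

theorem exists_seq (hc : c.IsAdmissible G m q) (hck : c.kept.Finite)
    (hD : ∀ r, IsRay G r → (Dom G r).Finite)
    (hm : ∀ r, IsRay G r → (m : EReal) < relDegree G r)
    (hq : ∀ r, IsRay G r → q + (Dom G r).ncard ≤ m) (r : ℕ → {r : ℕ → V // IsRay G r}) :
    ∃ d : ℕ → Cutoff V, Monotone d ∧ d 0 = c ∧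
      (∀ i, (d i).IsAdmissible G m q ∧ (d i).kept.Finite) ∧
      ∀ i, ∀ᶠ n in atTop, (r i).1 n ∈ (d (i + 1)).removed := by
  choose next hle hadm hfin hnext using
    fun (i : ℕ) (d : {d : Cutoff V // d.IsAdmissible G m q ∧ d.kept.Finite}) =>
      d.2.1.exists_eventually_mem_removed d.2.2 (r i).2 (hD _ (r i).2) (hm _ (r i).2) (hq _ (r i).2)
  let d (i : ℕ) : {d : Cutoff V // d.IsAdmissible G m q ∧ d.kept.Finite} :=
    i.rec ⟨c, hc, hck⟩ fun i d => ⟨next i d, hadm i d, hfin i d⟩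
  exact ⟨fun i => (d i).1, monotone_nat_of_le_succ fun i => hle i (d i), rfl, fun i => (d i).2,
    fun i => hnext i (d i)⟩

theorem exists_forall_isRay_eventually_mem_removed [Countable (Ends G)]
    (hc : c.IsAdmissible G m q) (hck : c.kept.Finite)
    (hD : ∀ r, IsRay G r → (Dom G r).Finite)
    (hm : ∀ r, IsRay G r → (m : EReal) < relDegree G r)
    (hq : ∀ r, IsRay G r → q + (Dom G r).ncard ≤ m) :
    ∃ d, c ≤ d ∧ d.IsAdmissible G m q ∧
      ∀ r, IsRay G r → ∀ᶠ n in atTop, r n ∈ d.removed := by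
  by_cases hray : ∃ r, IsRay G r
  swap
  · exact ⟨c, le_rfl, hc, fun r hr => absurd ⟨r, hr⟩ hray⟩
  obtain ⟨r₀, hr₀⟩ := hray
  have : Nonempty (Ends G) := ⟨Quot.mk _ ⟨r₀, hr₀⟩⟩
  obtain ⟨ω, hω⟩ := exists_surjective_nat (Ends G)
  choose r hr using fun i => Quot.exists_rep (ω i)
  obtain ⟨d, hmono, rfl, hd, hrd⟩ := hc.exists_seq hck hD hm hq r
  refine ⟨Cutoff.iUnion d, le_iUnion hmono 0, .iUnion hmono fun i => (hd i).1, fun f hf => ?_⟩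
  obtain ⟨i, hi⟩ := hω (Quot.mk _ ⟨f, hf⟩)
  have hequiv : EquivRay G (r i).1 f := EquivRay.of_mk_eq_mk (g := ⟨f, hf⟩) ((hr i).trans hi)
  have hbdry : (vBoundary G (d (i + 1)).removedᶜ).Finite :=
    (hd (i + 1)).2.subset (hd (i + 1)).1.vBoundary_compl_removed_subset
  filter_upwards [EquivRay.eventually_mem hf hequiv hbdry (hrd i)] with n hn
  exact removed_mono (le_iUnion hmono (i + 1)) hn

end Cutoff.IsAdmissible

end Construction

namespace Cutoff

variable {G : SimpleGraph V} {c : Cutoff V} {m q : ℝ} {R C : Set V}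

/-- A finite witness for the properties of the region `R`: it contains the kept vertices of `R`,
connects them inside `R`, and contains enough kept vertices for them to have average degree more
than `q`. -/
structure IsCore (G : SimpleGraph V) (q : ℝ) (c : Cutoff V) (R C : Set V) : Prop where
  finite : C.Finite
  inter_kept_subset : R ∩ c.kept ⊆ C
  sdiff_subset_kept : C \ R ⊆ c.kept
  connected : (G.induce (R ∩ C)).Connected
  lt_avgDegIn : q < avgDegIn G (C ∩ c.kept) (R ∩ c.kept)

namespace IsAdmissible

theorem exists_isCore (hc : c.IsAdmissible G m q) (hR : R ∈ c.regions) :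
    ∃ C, IsCore G q c R C := by
  have hfin := hc.finite_inter R hR
  obtain ⟨K, hK, hRK, hKR, hconn⟩ := exists_finite_induce_connected (hc.connected R hR) hfin
    (hc.nonempty_inter R hR) Set.inter_subset_left
  obtain ⟨T, hT, hTfin, hq⟩ := hc.exists_lt_avgDegIn R hR
  have hRT : R ∩ (K ∪ T) = K :=
    Set.Subset.antisymm (fun x hx => hx.2.elim id fun hxT => hRK ⟨hx.1, hT hxT⟩)
      fun x hx => ⟨hKR hx, .inl hx⟩
  refine ⟨K ∪ T, hK.union hTfin, hRK.trans Set.subset_union_left, ?_, by rwa [hRT], ?_⟩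
  · rintro x ⟨hx | hx, hxR⟩
    · exact absurd (hKR hx) hxR
    · exact hT hx
  · exact hq.trans_le (avgDegIn_le_avgDegIn hfin ((hK.union hTfin).inter_of_left _)
      fun v _ x hx => ⟨.inr hx.2, hT hx.2⟩)

theorem lt_encard_neighborSet_sdiff_removed (hc : c.IsAdmissible G m q) {v : V}
    (hv : v ∉ ⋃₀ c.regions) (hdeg : (m : EReal) < degER G v) :
    (m : EReal) < ((G.neighborSet v \ c.removed).encard : ℝ≥0∞) := by
  by_cases hadj : ∃ x ∈ c.removed, G.Adj x v
  · obtain ⟨x, hx, hxv⟩ := hadj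
    exact (hc.mem_kept_of_adj x hx v hv hxv).2.trans_le
      (coe_encard_le_coe_encard fun y hy => ⟨hy.1, fun hyr => hyr.2 hy.2⟩)
  · exact hdeg.trans_le
      (coe_encard_le_coe_encard fun y hy => ⟨hy, fun hyr => hadj ⟨y, hyr, SimpleGraph.Adj.symm hy⟩⟩)

theorem exists_core_neighborhoods (hc : c.IsAdmissible G m q)
    (hdeg : ∀ v, (m : EReal) < degER G v) :
    ∃ N : V → Set V, (∀ v, (N v).Finite) ∧
      (∀ R ∈ c.regions, ∃ C, IsCore G q c R C ∧ ∀ v ∈ R, N v = C) ∧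
      ∀ v ∉ ⋃₀ c.regions, Disjoint (N v) c.removed ∧
        (m : EReal) < ((G.neighborSet v ∩ N v).encard : ℝ≥0∞) := by
  choose! C hC using fun R hR => hc.exists_isCore (R := R) hR
  have hN (v : V) : ∃ N : Set V, N.Finite ∧ (∀ R ∈ c.regions, v ∈ R → N = C R) ∧
      (v ∉ ⋃₀ c.regions → Disjoint N c.removed ∧
        (m : EReal) < ((G.neighborSet v ∩ N).encard : ℝ≥0∞)) := by
    by_cases hv : v ∈ ⋃₀ c.regions
    · obtain ⟨R, hR, hvR⟩ := hv
      refine ⟨C R, (hC R hR).finite, fun S hS hvS => ?_, fun hv => absurd ⟨R, hR, hvR⟩ hv⟩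
      rw [hc.pairwiseDisjoint.elim_set hR hS v hvR hvS]
    · obtain ⟨t, ht, hmt⟩ :=
        coe_lt_encard_iff.1 (hc.lt_encard_neighborSet_sdiff_removed hv (hdeg v))
      refine ⟨t, t.finite_toSet, fun R hR hvR => absurd ⟨R, hR, hvR⟩ hv, fun _ =>
        ⟨Set.disjoint_left.2 fun x hx => (ht hx).2, ?_⟩⟩
      exact coe_lt_encard_iff.2 ⟨t, fun x hx => ⟨(ht hx).1, hx⟩, hmt⟩
  choose N hfin hreg hout using hN
  exact ⟨N, hfin, fun R hR => ⟨C R, hC R hR, fun v hv => hreg v R hR hv⟩, hout⟩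

end IsAdmissible

namespace IsCore

open Filter

variable {B : Set V} {N : V → Set V}

theorem exists_notMem_of_eventually_mem_removed {f : ℕ → V} (hf : IsRay G f)
    (hN : ∀ R ∈ c.regions, ∃ C, IsCore G q c R C ∧ ∀ v ∈ R, N v = C)
    (hfc : ∀ᶠ n in atTop, f n ∈ c.removed) : ∃ n, f (n + 1) ∉ N (f n) := by
  by_contra! hfN
  obtain ⟨M, hM⟩ := eventually_atTop.1 hfc
  obtain ⟨R, hR, hMR⟩ := (hM M le_rfl).1
  obtain ⟨C, hC, hNC⟩ := hN R hR
  have hfR : ∀ n ≥ M, f n ∈ R := by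
    intro n hn
    induction n, hn using Nat.le_induction with
    | base => exact hMR
    | succ n hn ih =>
      by_contra hnR
      exact (hM (n + 1) (by omega)).2 (hC.sdiff_subset_kept ⟨hNC _ ih ▸ hfN n, hnR⟩)
  obtain ⟨n, hn, hnC⟩ :=
    ((eventually_ge_atTop M).and ((tendsto_add_atTop_nat 1).eventually
      (hf.eventually_notMem hC.finite))).exists
  exact hnC (hNC _ (hfR n hn) ▸ hfN n)

theorem inter_subset_of_closed (hC : IsCore G q c R C)
    (hclosed : ∀ v ∈ B ∩ R, ∀ w ∈ C, G.Adj v w → w ∈ B) (hB : (R ∩ c.kept ∩ B).Nonempty) :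
    R ∩ C ⊆ B := by
  obtain ⟨v, hv, hvB⟩ := hB
  intro w hw
  have hreach : ReachAvoid G (R ∩ C)ᶜ v w :=
    (induce_connected_iff.1 hC.connected).2 v ⟨hv.1, hC.inter_kept_subset hv⟩ w hw
  refine (hreach.mem_of_vBoundary_subset (T := B ∪ (R ∩ C)ᶜ) ?_ (.inl hvB)).resolve_right
    fun h => h hw
  rintro x ⟨hx | hx, y, hy, hxy⟩ hxC
  · simp only [Set.mem_union, Set.mem_compl_iff, not_or, not_not] at hy
    exact hy.1 (hclosed x ⟨hx, hxC.1⟩ y hy.2.2 hxy)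
  · exact hx hxC

theorem lt_avgDegIn_of_closed (hC : IsCore G q c R C) (hBfin : B.Finite)
    (hclosed : ∀ v ∈ B ∩ R, ∀ w ∈ C, G.Adj v w → w ∈ B) (hB : R ∩ c.kept ⊆ B) :
    q < avgDegIn G (B \ c.removed) (R ∩ c.kept) := by
  refine hC.lt_avgDegIn.trans_le (avgDegIn_le_avgDegIn (hBfin.subset hB) hBfin.sdiff ?_)
  rintro v hv w ⟨hvw, hwC, hwk⟩
  exact ⟨hclosed v ⟨hB hv, hv.1⟩ w hwC hvw, fun hw => hw.2 hwk⟩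

end IsCore

theorem IsAdmissible.exists_finite_subgraph (hc : c.IsAdmissible G m q)
    (hdeg : ∀ v, (m : EReal) < degER G v)
    (hray : ∀ f, IsRay G f → ∀ᶠ n in Filter.atTop, f n ∈ c.removed) {X : Set V} (hX : X.Finite) :
    ∃ A, A.Finite ∧ X \ c.removed ⊆ A ∧
      (∀ R ∈ c.regions, (R ∩ A).Nonempty → q < avgDegIn G A (R ∩ A)) ∧
      ∀ v ∈ A \ ⋃₀ c.regions, (m : EReal) < ((G.neighborSet v ∩ A).encard : ℝ≥0∞) := by
  obtain ⟨N, hN, hcore, hout⟩ := hc.exists_core_neighborhoods hdeg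
  obtain ⟨B, hBfin, hXB, hclosed⟩ := exists_finite_closed_of_forall_isRay hN
    (fun f hf => IsCore.exists_notMem_of_eventually_mem_removed hf hcore (hray f hf)) hX
  refine ⟨B \ c.removed, hBfin.sdiff, Set.sdiff_subset_sdiff_left hXB, ?_, ?_⟩
  · intro R hR hRB
    have hRA : R ∩ (B \ c.removed) = R ∩ c.kept ∩ B := by
      ext x
      simp only [Set.mem_inter_iff, Set.mem_sdiff]
      grind [mem_removed_iff_of_mem]
    rw [hRA] at hRB ⊢
    obtain ⟨C, hC, hNC⟩ := hcore R hR
    have hclosedC : ∀ v ∈ B ∩ R, ∀ w ∈ C, G.Adj v w → w ∈ B :=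
      fun v hv w hw => hclosed v hv.1 w (hNC v hv.2 ▸ hw)
    have hsub : R ∩ c.kept ⊆ B :=
      (Set.subset_inter Set.inter_subset_left hC.inter_kept_subset).trans
        (hC.inter_subset_of_closed hclosedC hRB)
    rw [Set.inter_eq_left.2 hsub]
    exact hC.lt_avgDegIn_of_closed hBfin hclosedC hsub
  · intro v hv
    obtain ⟨hdisj, hm⟩ := hout v hv.2
    refine hm.trans_le (coe_encard_le_coe_encard fun w ⟨hvw, hw⟩ => ⟨hvw, ?_, ?_⟩)
    · exact hclosed v hv.1.1 w hw hvw
    · exact hdisj.notMem_of_mem_left hw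

end Cutoff

theorem exists_pairwiseDisjoint_connected_inter_eq {G : SimpleGraph V} {𝓡 : Set (Set V)}
    (hdisj : 𝓡.PairwiseDisjoint id) (hconn : ∀ R ∈ 𝓡, (G.induce R).Connected) (A : Set V) :
    ∃ H : Set V → Set V,
      (∀ F ∈ (· ∩ A) '' 𝓡, (G.induce (H F)).Connected ∧ H F ∩ A = F) ∧
      ((· ∩ A) '' 𝓡).PairwiseDisjoint H := by
  choose! H hH hHA using fun F (hF : F ∈ (· ∩ A) '' 𝓡) => hF
  refine ⟨H, fun F hF => ⟨hconn _ (hH F hF), hHA F hF⟩, fun F hF F' hF' hne => ?_⟩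
  exact hdisj (hH F hF) (hH F' hF') fun h => hne ((hHA F hF).symm.trans (h ▸ hHA F' hF'))

theorem cutoff_all_ends_general (k : ℕ) (m : ℝ) (G : SimpleGraph V) (hcount : Countable (Ends G))
    (hdomlt : ∀ r : ℕ → V, IsRay G r → (Dom G r).encard < (k : ℕ∞))
    (hdeg : ∀ v, (m : EReal) < degER G v)
    (hrel : ∀ r : ℕ → V, IsRay G r → (m : EReal) < (relDegree G r : EReal))
    (X : Set V) (hX : X.Finite) :
    ∃ (A : Set V) (F : Set (Set V)), A.Finite ∧
      (∀ F₁ ∈ F, F₁.Finite) ∧ F.PairwiseDisjoint id ∧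
      X ∪ ⋃₀ F ⊆ A ∧
      (∃ H : Set V → Set V, (∀ F₁ ∈ F, (G.induce (H F₁)).Connected ∧
          H F₁ ∩ A = F₁) ∧ F.PairwiseDisjoint H) ∧
      (∀ v ∈ A, (((G.neighborSet v ∩ A).encard : ℝ≥0∞) : EReal) ≤ (m : EReal) →
          ∃ F₁ ∈ F, v ∈ F₁ ∧ m - k + 1 < avgDegIn G A F₁) := by
  have hD (r) (hr : IsRay G r) : (Dom G r).Finite := Set.finite_of_encard_le_coe (hdomlt r hr).le
  have hq (r) (hr : IsRay G r) : m - k + 1 + (Dom G r).ncard ≤ m := by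
    have hk : (Dom G r).ncard + 1 ≤ k := by
      exact_mod_cast (hD r hr).cast_ncard_eq.trans_lt (hdomlt r hr)
    linarith [show ((Dom G r).ncard : ℝ) + 1 ≤ k from mod_cast hk]
  obtain ⟨d, hXd, hd, hray⟩ :=
    (Cutoff.IsAdmissible.of_regions_eq_empty (c := ⟨X, ∅⟩) rfl)
      |>.exists_forall_isRay_eventually_mem_removed hX hD hrel hq
  obtain ⟨A, hA, hXA, havg, hlarge⟩ := hd.exists_finite_subgraph hdeg hray hX
  have hF : ∀ F₁ ∈ (· ∩ A) '' d.regions, F₁ ⊆ A :=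
    Set.forall_mem_image.2 fun _ _ => Set.inter_subset_right
  obtain ⟨H, hH, hHdisj⟩ :=
    exists_pairwiseDisjoint_connected_inter_eq hd.pairwiseDisjoint hd.connected A
  refine ⟨A, (· ∩ A) '' d.regions, hA, fun F₁ hF₁ => hA.subset (hF F₁ hF₁), ?_,
    Set.union_subset (fun x hx => hXA ⟨hx, fun hxr => hxr.2 (hXd.1 hx)⟩) (Set.sUnion_subset hF),
    ⟨H, hH, hHdisj⟩, fun v hv hvm => ?_⟩
  · intro F₁ hF₁ F₂ hF₂ hne
    exact (hHdisj hF₁ hF₂ hne).mono ((hH F₁ hF₁).2.ge.trans Set.inter_subset_left)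
      ((hH F₂ hF₂).2.ge.trans Set.inter_subset_left)
  · obtain ⟨R, hR, hvR⟩ := not_not.1 fun h => hvm.not_gt (hlarge v ⟨hv, h⟩)
    exact ⟨R ∩ A, ⟨R, hR, rfl⟩, ⟨hvR, hv⟩, havg R hR ⟨v, hvR, hv⟩⟩

/-- cutting off all ends. If `G` has at most countably many ends,
every end is dominated by fewer than `k` vertices, every vertex has degree
`> m` and every end has relative degree `> m`, then for every finite `X` there
are an induced subgraph `G'` (on the vertex set `A`) and a collection `𝓕` of
pairwise disjoint finite vertex sets with properties (i)–(iv). -/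
theorem cutoff_all_ends (k : ℕ) (m : ℚ) (G : SimpleGraph V)
    (hcount : Countable (Ends G))
    (hdomlt : ∀ r : ℕ → V, IsRay G r → (Dom G r).encard < (k : ℕ∞))
    (hdeg : ∀ v, ((m : ℝ) : EReal) < degER G v)
    (hrel : ∀ r : ℕ → V, IsRay G r → ((m : ℝ) : EReal) < (relDegree G r : EReal))
    (X : Set V) (hX : X.Finite) :
    ∃ (A : Set V) (F : Set (Set V)),
      (∀ F₁ ∈ F, F₁.Finite) ∧ F.PairwiseDisjoint id ∧
      X ∪ ⋃₀ F ⊆ A ∧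
      (∃ H : Set V → Set V, (∀ F₁ ∈ F, (G.induce (H F₁)).Connected ∧
          H F₁ ∩ A = F₁) ∧ F.PairwiseDisjoint H) ∧
      (∀ v ∈ A, (((G.neighborSet v ∩ A).encard : ℝ≥0∞) : EReal) ≤ ((m : ℝ) : EReal) →
          ∃ F₁ ∈ F, v ∈ F₁ ∧ (m : ℝ) - k + 1 < avgDegIn G A F₁) ∧
      (∀ f : ℕ → V, IsRay G f → (Set.range f ∩ A).Finite) := by
  obtain ⟨A, F, hA, hfin, hdisj, hXF, hH, havg⟩ :=
    cutoff_all_ends_general k m G hcount hdomlt hdeg hrel X hX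
  exact ⟨A, F, hfin, hdisj, hXF, hH, havg, fun f _ => hA.inter_of_right _⟩

end Paper
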